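/- arXiv:1309.4620 — 2 statements merged into one kernel-verified Lean document; each statement's English description precedes it below -/
import Mathlib

section
/- Let A be a Noetherian complete local domain. Then the integral closure Ā of A in its field of fractions is a finite A-module, and Ā is itself a Noetherian local domain which is complete with respect to the adic topology of its maximal ideal. -/
set_option synthInstance.maxHeartbeats 1000000
set_option maxHeartbeats 1000000

noncomputable section

/-!
Let `A` be a complete Noetherian local ring. Every domain `G` which is integral and generically
finite over `A` is a finite `A`-module; this is proved by Noetherian induction on the kernel of
`A → G`. One may replace `G` by its normalization `D`. For a nonzero `a` in the maximal ideal of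
the image of `A`, the Mori–Nagata argument, with ideal transforms and Matijevic's theorem in place
of completions, shows that `aD` has only finitely many weakly associated primes `P`, that each
`D_P` is a discrete valuation ring, and that each `D ⧸ P` is generically finite over `A`. By
induction the `D ⧸ P` are finite over `A`, and a dévissage along the powers of the primes `P` shows
that `D ⧸ aD` is finite as well. Completeness of `A` then makes `D` itself finite.

For the remaining claims, `Ā` is complete for the ideal `mĀ` generated by the maximal ideal `m` of
`A`, so idempotents of `Ā ⧸ mĀ` lift by Hensel's lemma. As `Ā` is a domain, the Artinian ring
`Ā ⧸ mĀ` has only trivial idempotents, hence is local, and the maximal ideal of `Ā` defines the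
same topology as `mĀ`.
-/

namespace CompleteLocalDomain

open IsLocalRing

section Modules

variable {R M : Type*} [CommRing R] [AddCommGroup M] [Module R M]

lemma exists_isPrime_forall_mem_iff_smul_mem [IsNoetherianRing R] {N : Submodule R M} {w : M}
    (hw : w ∉ N) : ∃ (Q : Ideal R) (a : R), Q.IsPrime ∧ ∀ b, b ∈ Q ↔ b • a • w ∈ N := by
  let ann (a : R) : Ideal R := N.comap (LinearMap.toSpanSingleton R M (a • w))
  obtain ⟨_, ⟨a, ha, rfl⟩, hmax⟩ := set_has_maximal_iff_noetherian.mpr ‹_›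
    {Q | ∃ a, a • w ∉ N ∧ Q = ann a} ⟨ann 1, 1, by rwa [one_smul], rfl⟩
  refine ⟨ann a, a, ⟨(Ideal.ne_top_iff_one _).mpr fun h => ha ?_, fun {b c} hbc => ?_⟩,
    fun b => Iff.rfl⟩
  · simpa [ann] using h
  refine or_iff_not_imp_left.mpr fun hb => ?_
  have hle : ann a ≤ ann (b * a) := fun d (hd : d • a • w ∈ N) => by
    change d • (b * a) • w ∈ N
    rw [mul_smul, smul_comm]
    exact N.smul_mem b hd
  have hba : (b * a) • w ∉ N := by rwa [mul_smul]
  rw [eq_of_le_of_not_lt hle (hmax _ ⟨b * a, hba, rfl⟩)]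
  change c • (b * a) • w ∈ N
  rw [smul_smul, ← mul_assoc, mul_comm c b, mul_smul]
  exact hbc

lemma exists_pow_smul_le {I : Ideal R} {N N' : Submodule R M} (hN : N.FG)
    (h : ∀ s ∈ N, ∃ k, ∀ a ∈ I ^ k, a • s ∈ N') : ∃ k, I ^ k • N ≤ N' := by
  induction N, hN using Submodule.fg_induction with
  | singleton s =>
    obtain ⟨k, hk⟩ := h s (Submodule.mem_span_singleton_self s)
    refine ⟨k, Submodule.smul_le.mpr fun a ha y hy => ?_⟩
    obtain ⟨r, rfl⟩ := Submodule.mem_span_singleton.mp hy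
    exact smul_comm r a s ▸ N'.smul_mem r (hk a ha)
  | sup N₁ N₂ _ _ ih₁ ih₂ =>
    obtain ⟨k, hk⟩ := ih₁ fun s hs => h s (Submodule.mem_sup_left hs)
    obtain ⟨l, hl⟩ := ih₂ fun s hs => h s (Submodule.mem_sup_right hs)
    refine ⟨max k l, ?_⟩
    rw [Submodule.smul_sup]
    exact sup_le
      ((Submodule.smul_mono_left (Ideal.pow_le_pow_right (le_max_left k l))).trans hk)
      ((Submodule.smul_mono_left (Ideal.pow_le_pow_right (le_max_right k l))).trans hl)

lemma isArtinianRing_quotient_of_pow_le [IsNoetherianRing R] {I J : Ideal R} [hI : I.IsMaximal]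
    {k : ℕ} (hJ : I ^ k ≤ J) : IsArtinianRing (R ⧸ J) := by
  refine isArtinianRing_iff_isNoetherianRing_krullDimLE_zero.mpr
    ⟨inferInstance, .mk₀ fun Q hQ => ?_⟩
  have hle : I ≤ Q.comap (Ideal.Quotient.mk J) :=
    Ideal.IsPrime.le_of_pow_le (hJ.trans (Ideal.mk_ker.symm.trans_le (Ideal.comap_mono bot_le)))
  rw [← Ideal.map_comap_of_surjective _ Ideal.Quotient.mk_surjective Q,
    ← hI.eq_of_le (Ideal.comap_ne_top _ hQ.ne_top) hle]
  refine Or.resolve_left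
    (Ideal.map_eq_top_or_isMaximal_of_surjective _ Ideal.Quotient.mk_surjective hI)
    fun h => hQ.ne_top (top_le_iff.mp (h ▸ Ideal.map_le_iff_le_comap.mpr hle))

lemma isArtinian_of_pow_smul_eq_zero [IsNoetherianRing R] [Module.Finite R M] {I : Ideal R}
    [I.IsMaximal] {k : ℕ} (h : ∀ a ∈ I ^ k, ∀ y : M, a • y = 0) : IsArtinian R M := by
  have htorsion : Module.IsTorsionBySet R M (I ^ k : Ideal R) := fun y a => h a a.2 y
  let := htorsion.module
  have : IsScalarTower R (R ⧸ I ^ k) M := htorsion.isScalarTower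
  have : Module.Finite (R ⧸ I ^ k) M := .of_restrictScalars_finite R _ _
  have : IsArtinianRing (R ⧸ I ^ k) := isArtinianRing_quotient_of_pow_le le_rfl
  exact isArtinian_of_surjective_algebraMap (Ideal.Quotient.mk_surjective (I := I ^ k))

lemma exists_forall_le_succ_of_isArtinian {f : ℕ → Submodule R M} (hf : Antitone f)
    [IsArtinian R (f 0)] : ∃ n, ∀ k, n ≤ k → f k ≤ f (k + 1) := by
  obtain ⟨n, hn⟩ := IsArtinian.monotone_stabilizes
    (⟨fun k => OrderDual.toDual ((f k).submoduleOf (f 0)),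
      fun _ _ h => Submodule.comap_mono (hf h)⟩ : ℕ →o (Submodule R (f 0))ᵒᵈ)
  refine ⟨n, fun k hk y hy => ?_⟩
  have heq : (f k).submoduleOf (f 0) = (f (k + 1)).submoduleOf (f 0) :=
    (hn k hk).symm.trans (hn (k + 1) (by lia))
  exact heq.le (x := ⟨y, hf (Nat.zero_le k) hy⟩) hy

end Modules

section IdealTransform

/-- The ideal transform of `R` with respect to `I` inside an `R`-algebra `K`: the elements of `K`
which some power of `I` multiplies into the image of `R`. -/
def idealTransform {R : Type*} [CommRing R] (I : Ideal R) (K : Type*) [CommRing K] [Algebra R K] :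
    Subalgebra R K where
  carrier := {z | ∃ k, ∀ a ∈ I ^ k, a • z ∈ (⊥ : Subalgebra R K)}
  add_mem' := by
    rintro z w ⟨k, hk⟩ ⟨l, hl⟩
    refine ⟨max k l, fun a ha => ?_⟩
    rw [smul_add]
    exact add_mem (hk a (Ideal.pow_le_pow_right (le_max_left k l) ha))
      (hl a (Ideal.pow_le_pow_right (le_max_right k l) ha))
  mul_mem' := by
    rintro z w ⟨k, hk⟩ ⟨l, hl⟩
    refine ⟨k + l, fun a ha => ?_⟩
    rw [pow_add] at ha
    induction ha using Submodule.mul_induction_on' with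
    | mem_mul_mem a ha b hb =>
      rw [← smul_mul_smul_comm]
      exact mul_mem (hk a ha) (hl b hb)
    | add a _ b _ iha ihb => exact add_smul a b (z * w) ▸ add_mem iha ihb
  algebraMap_mem' r := ⟨0, fun a _ => Subalgebra.smul_mem _ (Subalgebra.algebraMap_mem _ r) a⟩

variable {R K : Type*} [CommRing R] [Field K] [Algebra R K] {I : Ideal R} {C : Subalgebra R K}

lemma smul_pow_mem_of_mem_pow {B : Subalgebra R K} {z : K} (h : ∀ a ∈ I, a • z ∈ B) (n : ℕ) :
    ∀ a ∈ I ^ n, a • z ^ n ∈ B := by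
  induction n with
  | zero => exact fun a _ => B.smul_mem (by simp [B.one_mem]) a
  | succ n ih =>
    intro a ha
    rw [pow_succ] at ha
    induction ha using Submodule.mul_induction_on' with
    | mem_mul_mem a ha b hb =>
      rw [pow_succ, ← smul_mul_smul_comm]
      exact mul_mem (ih a ha) (h b hb)
    | add a _ b _ iha ihb => exact add_smul a b (z ^ (n + 1)) ▸ add_mem iha ihb

/-- The ideal `xⁿC ∩ R` of `R`. Modulo `x` these ideals form a descending chain in `R ⧸ xR`, whose
stabilisation yields the finiteness of `C ⧸ xC` over `R`. -/
def powContraction (C : Subalgebra R K) (x : R) (n : ℕ) : Ideal R :=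
  (C.toSubmodule.map (LinearMap.lsmul R K (x ^ n))).comap (Algebra.linearMap R K)

lemma mem_powContraction {x a : R} {n : ℕ} :
    a ∈ powContraction C x n ↔ ∃ c ∈ C, x ^ n • c = algebraMap R K a := Iff.rfl

lemma powContraction_antitone (x : R) : Antitone (powContraction C x) :=
  antitone_nat_of_succ_le fun n => by
    rintro a ⟨c, hc, hca⟩
    refine ⟨x • c, C.smul_mem hc x, ?_⟩
    simpa only [LinearMap.lsmul_apply, pow_succ, mul_smul] using hca

lemma exists_sub_smul_mem_of_powContraction_le [FaithfulSMul R K] {x r : R}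
    {m : ℕ} (hx : x ≠ 0) (hle : Submodule.map (Ideal.span {x}).mkQ (powContraction C x (m + 1)) ≤
      Submodule.map (Ideal.span {x}).mkQ (powContraction C x (m + 2))) {c : K} (hc : c ∈ C)
    (hr : x ^ (m + 1) • c = algebraMap R K r) :
    ∃ c' ∈ C, x ^ m • (c - x • c') ∈ (⊥ : Subalgebra R K) := by
  obtain ⟨s, hs, hsr⟩ := hle ⟨r, ⟨c, hc, hr⟩, rfl⟩
  obtain ⟨c', hc', hcs⟩ := mem_powContraction.mp hs
  obtain ⟨t, ht⟩ := Ideal.mem_span_singleton.mp ((Submodule.Quotient.eq _).mp hsr.symm)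
  refine ⟨c', hc', Algebra.mem_bot.mpr ⟨t, ?_⟩⟩
  have hx' : algebraMap R K x ≠ 0 := by rwa [Ne, FaithfulSMul.algebraMap_eq_zero_iff]
  apply mul_left_cancel₀ hx'
  rw [← map_mul, ← ht, map_sub, ← hr, ← hcs]
  simp only [Algebra.smul_def, map_pow]
  ring

lemma comap_algebraMap_ne_bot [IsDomain R] [IsFractionRing R K] {J : Ideal C}
    (hJ : J ≠ ⊥) : J.comap (algebraMap R C) ≠ ⊥ := by
  obtain ⟨c, hcJ, hc⟩ := Submodule.exists_mem_ne_zero_of_ne_bot hJ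
  have halg : IsAlgebraic R (C.val c) :=
    (IsLocalization.isAlgebraic K (nonZeroDivisors R)).isAlgebraic _
  exact Ideal.comap_ne_bot_of_algebraic_mem hc hcJ
    ((isAlgebraic_algHom_iff C.val Subtype.val_injective).mp halg)

variable [IsFractionRing R K] [IsNoetherianRing R]

lemma isArtinian_map_mkQ_powContraction [I.IsMaximal] (hC : C ≤ idealTransform I K) (x : R) :
    IsArtinian R (Submodule.map (Ideal.span {x}).mkQ (powContraction C x 1)) := by
  have hpow : ∀ s ∈ powContraction C x 1, ∃ k, ∀ a ∈ I ^ k, a • s ∈ Ideal.span {x} := by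
    intro s hs
    obtain ⟨c, hc, hcs⟩ := mem_powContraction.mp hs
    obtain ⟨k, hk⟩ := hC hc
    refine ⟨k, fun a ha => Ideal.mem_span_singleton.mpr ?_⟩
    obtain ⟨r, hr⟩ := Algebra.mem_bot.mp (hk a ha)
    refine ⟨r, IsFractionRing.injective R K ?_⟩
    rw [smul_eq_mul, map_mul, map_mul, hr, ← hcs]
    simp only [Algebra.smul_def, pow_one]
    ring
  obtain ⟨k, hk⟩ := exists_pow_smul_le (IsNoetherian.noetherian _) hpow
  have : Module.Finite R (Submodule.map (Ideal.span {x}).mkQ (powContraction C x 1)) :=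
    .of_fg ((IsNoetherian.noetherian _).map _)
  refine isArtinian_of_pow_smul_eq_zero (I := I) (k := k) ?_
  rintro a ha ⟨_, s, hs, rfl⟩
  exact Subtype.ext ((Submodule.Quotient.mk_eq_zero _).mpr (hk (Submodule.smul_mem_smul ha hs)))

lemma exists_forall_pow_smul_sub_smul_mem_bot [I.IsMaximal] (hC : C ≤ idealTransform I K) {x : R}
    (hxI : x ∈ I) (hx : x ≠ 0) :
    ∃ n, ∀ b ∈ C, ∃ c ∈ C, x ^ n • (b - x • c) ∈ (⊥ : Subalgebra R K) := by
  have := isArtinian_map_mkQ_powContraction hC x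
  obtain ⟨n, hn⟩ := exists_forall_le_succ_of_isArtinian
    (f := fun n => Submodule.map (Ideal.span {x}).mkQ (powContraction C x (n + 1)))
    fun k l hkl => Submodule.map_mono (powContraction_antitone x (by lia))
  have descend (j : ℕ) : ∀ b ∈ C, x ^ (n + j) • b ∈ (⊥ : Subalgebra R K) →
      ∃ c ∈ C, x ^ n • (b - x • c) ∈ (⊥ : Subalgebra R K) := by
    induction j with
    | zero => exact fun b _ hb => ⟨0, C.zero_mem, by simpa using hb⟩
    | succ j ih =>
      intro b hb hbx
      obtain ⟨r, hr⟩ := Algebra.mem_bot.mp hbx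
      obtain ⟨c, hc, hbc⟩ :=
        exists_sub_smul_mem_of_powContraction_le hx (hn (n + j) (by lia)) hb hr.symm
      obtain ⟨c', hc', hbc'⟩ := ih _ (sub_mem hb (C.smul_mem hc x)) hbc
      exact ⟨c + c', add_mem hc hc', by rwa [smul_add, ← sub_sub]⟩
  refine ⟨n, fun b hb => ?_⟩
  obtain ⟨k, hk⟩ := hC hb
  refine descend k b hb ?_
  rw [pow_add, mul_smul]
  exact Subalgebra.smul_mem _ (hk _ (Ideal.pow_mem_pow hxI k)) _

variable [IsDomain R]

-- The key step of Matijevic's theorem: `C ⧸ xC` is finite over `R`.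
lemma exists_fg_forall_exists_sub_smul_mem [I.IsMaximal] (hC : C ≤ idealTransform I K) {x : R}
    (hxI : x ∈ I) (hx : x ≠ 0) :
    ∃ N : Submodule R K, N.FG ∧ N ≤ C.toSubmodule ∧ ∀ b ∈ C, ∃ c ∈ C, b - x • c ∈ N := by
  obtain ⟨n, hn⟩ := exists_forall_pow_smul_sub_smul_mem_bot hC hxI hx
  refine ⟨C.toSubmodule ⊓ (1 : Submodule R K).comap (LinearMap.lsmul R K (x ^ n)), ?_,
    inf_le_left, fun b hb => ?_⟩
  · have hx' : algebraMap R K (x ^ n) ≠ 0 := by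
      rw [Ne, FaithfulSMul.algebraMap_eq_zero_iff]
      exact pow_ne_zero n hx
    refine Submodule.fg_of_fg_map_injective (LinearMap.lsmul R K (x ^ n)) (fun a b hab => ?_) ?_
    · simpa only [LinearMap.lsmul_apply, Algebra.smul_def, mul_right_inj' hx'] using hab
    · have hone : (1 : Submodule R K).FG := by
        rw [Submodule.one_eq_span]
        exact Submodule.fg_span_singleton 1
      exact hone.of_le (Submodule.map_le_iff_le_comap.mpr inf_le_right)
  · obtain ⟨c, hc, hbc⟩ := hn b hb
    refine ⟨c, hc, sub_mem hb (C.smul_mem hc x), ?_⟩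
    rwa [← Algebra.toSubmodule_bot]

lemma fg_of_algebraMap_mem [I.IsMaximal] (hC : C ≤ idealTransform I K) {x : R} (hxI : x ∈ I)
    (hx : x ≠ 0) {J : Ideal C} (hxJ : algebraMap R C x ∈ J) : J.FG := by
  obtain ⟨N, hN, -, hCN⟩ := exists_fg_forall_exists_sub_smul_mem hC hxI hx
  have hfg : (N.comap C.val.toLinearMap ⊓ J.restrictScalars R).FG :=
    Submodule.fg_of_fg_map_injective C.val.toLinearMap Subtype.val_injective <|
      hN.of_le (Submodule.map_le_iff_le_comap.mpr inf_le_left)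
  obtain ⟨S, hS⟩ := hfg
  have hJ : J = Submodule.span C S ⊔ Ideal.span {algebraMap R C x} := by
    rw [← Submodule.span_span_of_tower R C (S : Set C), hS]
    refine le_antisymm (fun b hb => ?_) (sup_le (Submodule.span_le.mpr fun _ h => h.2)
      ((Ideal.span_singleton_le_iff_mem J).mpr hxJ))
    obtain ⟨c, hc, hbc⟩ := hCN b b.2
    have hxc : algebraMap R C x * ⟨c, hc⟩ ∈ Ideal.span {algebraMap R C x} :=
      Ideal.mul_mem_right _ _ (Ideal.mem_span_singleton_self _)
    rw [← sub_add_cancel b (algebraMap R C x * ⟨c, hc⟩)]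
    refine add_mem (Submodule.mem_sup_left (Submodule.subset_span ⟨?_, ?_⟩))
      (Submodule.mem_sup_right hxc)
    · simpa [Algebra.smul_def] using hbc
    · exact sub_mem hb (J.mul_mem_right _ hxJ)
  exact hJ ▸ (Submodule.fg_span S.finite_toSet).sup (Submodule.fg_span_singleton _)

lemma isNoetherianRing_of_le_idealTransform [I.IsMaximal] (hC : C ≤ idealTransform I K) :
    IsNoetherianRing C := by
  refine isNoetherianRing_iff_ideal_fg C |>.mpr fun J => ?_
  by_cases hJ : J = ⊥
  · exact hJ ▸ Submodule.fg_bot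
  obtain ⟨y, hyJ, hy⟩ := Submodule.exists_mem_ne_zero_of_ne_bot (comap_algebraMap_ne_bot hJ)
  by_cases hI : I = ⊥
  · obtain ⟨r, i, hi, hri⟩ := Ideal.IsMaximal.exists_inv ‹I.IsMaximal› (x := y) (by simpa [hI])
    have : J = ⊤ := (Ideal.eq_top_iff_one J).mpr <| by
      rw [hI, Ideal.mem_bot] at hi
      rw [← map_one (algebraMap R C), ← hri, hi, add_zero, map_mul]
      exact J.mul_mem_left _ hyJ
    exact this ▸ Ideal.fg_top C
  obtain ⟨i, hi, hi0⟩ := Submodule.exists_mem_ne_zero_of_ne_bot hI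
  exact fg_of_algebraMap_mem hC (I.mul_mem_left y hi) (mul_ne_zero hy hi0) <| by
    rw [map_mul]
    exact J.mul_mem_right _ hyJ

lemma isIntegral_idealTransform_of_pow_smul_isIntegral [I.IsMaximal] {z : K} {k : ℕ}
    (hz : ∀ a ∈ I ^ k, IsIntegral R (a • z)) : IsIntegral (idealTransform I K) z := by
  obtain ⟨S, hS⟩ := IsNoetherian.noetherian (I ^ k)
  let B : Subalgebra R K := Algebra.adjoin R ((· • z) '' (S : Set R))
  have hB : (Subalgebra.toSubmodule B).FG :=
    fg_adjoin_of_finite (S.finite_toSet.image _) <| by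
      rintro _ ⟨a, ha, rfl⟩
      exact hz a (hS ▸ Submodule.subset_span ha)
  have hzB : ∀ a ∈ I ^ k, a • z ∈ B := by
    have : Submodule.span R (S : Set R) ≤
        (Subalgebra.toSubmodule B).comap (LinearMap.toSpanSingleton R K z) :=
      Submodule.span_le.mpr fun a ha => Algebra.subset_adjoin ⟨a, ha, rfl⟩
    rwa [hS] at this
  obtain ⟨f, hf, hfB⟩ := FractionalIdeal.isFractional_of_fg (S := nonZeroDivisors R) hB
  have hfz (n : ℕ) : f • z ^ n ∈ idealTransform I K := by
    refine ⟨k * n, fun a ha => ?_⟩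
    rw [smul_comm]
    exact Algebra.mem_bot.mpr (hfB _ (smul_pow_mem_of_mem_pow hzB n a (pow_mul I k n ▸ ha)))
  have := isNoetherianRing_of_le_idealTransform (le_refl (idealTransform I K))
  refine IsAlmostIntegral.isIntegral ⟨algebraMap R _ f, ?_, fun n => ⟨⟨_, hfz n⟩, ?_⟩⟩
  · exact map_mem_nonZeroDivisors _ (FaithfulSMul.algebraMap_injective R _) hf
  · simp [Algebra.smul_def]

end IdealTransform

-- If `u` multiplied the maximal ideal into itself, it would be integral by Cayley–Hamilton; so
-- some element of the maximal ideal is a multiple of `u⁻¹`, and it generates the maximal ideal.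
lemma isDiscreteValuationRing_of_smul_mem_bot {B K : Type*} [CommRing B] [IsDomain B]
    [IsNoetherianRing B] [IsLocalRing B] [Field K] [Algebra B K] [IsFractionRing B K] {u : K}
    (hu : ¬ IsIntegral B u) (hmu : ∀ a ∈ maximalIdeal B, a • u ∈ (⊥ : Subalgebra B K)) :
    IsDiscreteValuationRing B := by
  have hB : ¬ IsField B := fun hB =>
    let ⟨b, hb⟩ := IsFractionRing.surjective_iff_isField.mpr hB u
    hu (hb ▸ isIntegral_algebraMap)
  obtain ⟨p, hp, hpu⟩ : ∃ p ∈ maximalIdeal B, p • u = 1 := by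
    by_contra! h
    refine hu (isIntegral_of_smul_mem_submodule
      (Submodule.map (Algebra.linearMap B K) (maximalIdeal B)) ?_
      ((IsNoetherian.noetherian _).map _) u ?_)
    · rw [← Submodule.map_bot (Algebra.linearMap B K)]
      exact (Submodule.map_injective_of_injective (IsFractionRing.injective B K)).ne
        (isField_iff_maximalIdeal_eq.not.mp hB)
    rintro _ ⟨a, ha, rfl⟩
    obtain ⟨b, hb⟩ := Algebra.mem_bot.mp (hmu a ha)
    have hbm : b ∈ maximalIdeal B := by
      rintro ⟨v, rfl⟩
      refine h (v⁻¹ • a) (Ideal.mul_mem_left _ _ ha) ?_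
      rw [smul_assoc, ← hb, Units.smul_def, Algebra.smul_def, ← map_mul, v.inv_mul, map_one]
    exact ⟨b, hbm, by rw [Algebra.linearMap_apply, hb, Algebra.smul_def, mul_comm]; rfl⟩
  have hmax : maximalIdeal B = Ideal.span {p} := by
    refine le_antisymm (fun a ha => ?_) ((Ideal.span_singleton_le_iff_mem _).mpr hp)
    obtain ⟨b, hb⟩ := Algebra.mem_bot.mp (hmu a ha)
    refine Ideal.mem_span_singleton.mpr ⟨b, IsFractionRing.injective B K ?_⟩
    rw [map_mul, hb, ← Algebra.smul_def, smul_comm, hpu, Algebra.smul_def, mul_one]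
  exact ((IsDiscreteValuationRing.TFAE B hB).out 4 0 :
    (maximalIdeal B).IsPrincipal ↔ _).mp ⟨p, hmax⟩

section LocalSubring

open LocalSubring

variable {K : Type*} [Field K]

lemma mem_of_isUnit_of_mul_mem {B : Subring K} {s : B} (hs : IsUnit s) {x : K}
    (hsx : s * x ∈ B) : x ∈ B := by
  obtain ⟨v, rfl⟩ := hs
  have hx : ((v⁻¹ : Bˣ) : B) * (v * x) = x := by
    rw [← mul_assoc, ← Subring.coe_mul, v.inv_mul, Subring.coe_one, one_mul]
  exact hx ▸ mul_mem (SetLike.coe_mem _) hsx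

lemma eq_of_le_of_valuationRing {B O : LocalSubring K} [ValuationRing B.toSubring]
    [IsFractionRing B.toSubring K] (h : B ≤ O) : B = O := by
  have mem_or_inv_mem (x : K) : x ∈ B.toSubring ∨ x⁻¹ ∈ B.toSubring :=
    (ValuationRing.isInteger_or_isInteger B.toSubring x).imp
      (fun ⟨b, hb⟩ => hb ▸ b.2) fun ⟨b, hb⟩ => hb ▸ b.2
  let V : ValuationSubring K := { B.toSubring with mem_or_inv_mem' := mem_or_inv_mem }
  exact V.isMax_toLocalSubring.eq_of_le h

section ofPrime

variable {A : Subring K} {P : Ideal A} [P.IsPrime]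

lemma mem_ofPrime {x : K} : x ∈ (ofPrime A P).toSubring ↔ ∃ s : A, s ∉ P ∧ s • x ∈ A := by
  constructor
  · intro hx
    obtain ⟨⟨a, s⟩, h⟩ := IsLocalization.surj P.primeCompl (⟨x, hx⟩ : (ofPrime A P).toSubring)
    refine ⟨s, s.2, ?_⟩
    have hs : x * (s : A) = a := congrArg Subtype.val h
    rw [Subring.smul_def, smul_eq_mul, mul_comm, hs]
    exact a.2
  · rintro ⟨s, hs, hsx⟩
    exact mem_of_isUnit_of_mul_mem
      (IsLocalization.map_units (ofPrime A P).toSubring (⟨s, hs⟩ : P.primeCompl))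
      (le_ofPrime A P hsx)

lemma inclusion_mem_maximalIdeal_ofPrime {a : A} :
    Subring.inclusion (le_ofPrime A P) a ∈ maximalIdeal (ofPrime A P).toSubring ↔ a ∈ P :=
  IsLocalization.AtPrime.to_map_mem_maximal_iff _ P a

instance [IsFractionRing A K] : IsFractionRing (ofPrime A P).toSubring K :=
  IsFractionRing.isFractionRing_of_isDomain_of_isLocalization P.primeCompl _ _

instance [IsNoetherianRing A] : IsNoetherianRing (ofPrime A P).toSubring :=
  IsLocalization.isNoetherianRing P.primeCompl _ ‹_›

lemma ofPrime_le {O : LocalSubring K} (h : A ≤ O.toSubring)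
    (hP : P = (maximalIdeal O.toSubring).comap (Subring.inclusion h)) : ofPrime A P ≤ O := by
  have hle : (ofPrime A P).toSubring ≤ O.toSubring := by
    intro x hx
    obtain ⟨s, hs, hsx⟩ := mem_ofPrime.mp hx
    have hsO : IsUnit (Subring.inclusion h s) := by
      rwa [hP, Ideal.mem_comap, mem_maximalIdeal, mem_nonunits_iff, not_not] at hs
    exact mem_of_isUnit_of_mul_mem hsO (h hsx)
  refine ⟨hle, ((local_hom_TFAE _).out 2 0).mp ?_⟩
  rw [← IsLocalization.AtPrime.map_eq_maximalIdeal P (ofPrime A P).toSubring, Ideal.map_map]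
  exact Ideal.map_le_iff_le_comap.mpr hP.le

end ofPrime

section IntegralTransform

lemma isFractionRing_of_le {A B : Subring K} [IsFractionRing A K] (h : A ≤ B) :
    IsFractionRing B K :=
  .of_field B K fun z =>
    let ⟨x, y, _, hz⟩ := IsFractionRing.div_surjective A z
    ⟨Subring.inclusion h x, Subring.inclusion h y, hz.symm⟩

lemma mem_bot_iff {B : Subring K} {x : K} : x ∈ (⊥ : Subalgebra B K) ↔ x ∈ B :=
  ⟨fun ⟨b, hb⟩ => hb ▸ b.2, fun h => ⟨⟨x, h⟩, rfl⟩⟩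

variable (R : LocalSubring K)

/-- The integral closure of a local subring `R` of `K` in its ideal transform with respect to the
maximal ideal. -/
def integralTransform : Subring K :=
  (idealTransform (maximalIdeal R.toSubring) K ⊓ integralClosure R.toSubring K).toSubring

lemma le_integralTransform : R.toSubring ≤ integralTransform R := fun x hx =>
  algebraMap_mem (idealTransform (maximalIdeal R.toSubring) K ⊓ integralClosure R.toSubring K)
    ⟨x, hx⟩

instance : Algebra R.toSubring (integralTransform R) :=
  inferInstanceAs (Algebra R.toSubring
    ↥(idealTransform (maximalIdeal R.toSubring) K ⊓ integralClosure R.toSubring K))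

instance : IsScalarTower R.toSubring (integralTransform R) K :=
  .of_algebraMap_eq fun _ => rfl

instance : Algebra.IsIntegral R.toSubring (integralTransform R) where
  isIntegral c := (isIntegral_algebraMap_iff (B := K) Subtype.val_injective).mp c.2.2

instance [IsNoetherianRing R.toSubring] [IsFractionRing R.toSubring K] :
    IsNoetherianRing (integralTransform R) :=
  isNoetherianRing_of_le_idealTransform (I := maximalIdeal R.toSubring)
    (C := idealTransform (maximalIdeal R.toSubring) K ⊓ integralClosure R.toSubring K) inf_le_left

instance [IsFractionRing R.toSubring K] : IsFractionRing (integralTransform R) K :=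
  isFractionRing_of_le (le_integralTransform R)

variable {R} {O : LocalSubring K} [IsIntegrallyClosedIn O.toSubring K]

lemma integralTransform_le (hRO : R ≤ O) : integralTransform R ≤ O.toSubring :=
  fun _ hz => Subring.integralClosure_subring_le_iff.mpr hRO.1 hz.2

/-- The centre of a dominating local ring `O` on the integral transform of `R`. -/
def center (hRO : R ≤ O) : Ideal (integralTransform R) :=
  (maximalIdeal O.toSubring).comap (Subring.inclusion (integralTransform_le hRO))

instance (hRO : R ≤ O) : (center hRO).IsPrime :=
  Ideal.comap_isPrime _ _

lemma comap_center (hRO : R ≤ O) :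
    (center hRO).comap (algebraMap R.toSubring (integralTransform R)) =
      maximalIdeal R.toSubring :=
  have := hRO.2
  IsLocalRing.maximalIdeal_comap (Subring.inclusion hRO.1)

lemma ofPrime_center_le (hRO : R ≤ O) : ofPrime (integralTransform R) (center hRO) ≤ O :=
  ofPrime_le (integralTransform_le hRO) rfl

lemma isMaximal_of_comap_eq_maximalIdeal {Q : Ideal (integralTransform R)} [Q.IsPrime]
    (hQ : Q.comap (algebraMap R.toSubring (integralTransform R)) = maximalIdeal R.toSubring) :
    Q.IsMaximal :=
  Ideal.isMaximal_of_isIntegral_of_isMaximal_comap (R := R.toSubring) Q <| by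
    rw [hQ]
    infer_instance

variable [IsNoetherianRing R.toSubring] [IsFractionRing R.toSubring K]

lemma exists_forall_mem_center_smul_mem (hRO : R ≤ O) {w : K}
    (hw : w ∈ idealTransform (maximalIdeal R.toSubring) K) (hwO : w ∉ O.toSubring) :
    ∃ a : integralTransform R, a • w ∉ (ofPrime (integralTransform R) (center hRO)).toSubring ∧
      ∀ b ∈ center hRO, b • a • w ∈ (ofPrime (integralTransform R) (center hRO)).toSubring := by
  let B := ofPrime (integralTransform R) (center hRO)
  let N : Submodule (integralTransform R) K :=
    (Subalgebra.toSubmodule (⊥ : Subalgebra B.toSubring K)).restrictScalars _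
  have mem_N {x : K} : x ∈ N ↔ x ∈ B.toSubring := mem_bot_iff
  obtain ⟨Q, a, hQ, hQa⟩ := exists_isPrime_forall_mem_iff_smul_mem (N := N) (w := w)
    fun hwN => hwO ((ofPrime_center_le hRO).1 (mem_N.mp hwN))
  have haw : a • w ∉ N := fun h => hQ.ne_top ((Ideal.eq_top_iff_one Q).mpr <| by
    rwa [hQa, one_smul])
  have hQR : Q.comap (algebraMap R.toSubring (integralTransform R)) = maximalIdeal R.toSubring := by
    obtain ⟨k, hk⟩ := hw
    have hpow : maximalIdeal R.toSubring ^ k ≤ Q.comap (algebraMap _ _) := fun r hr => by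
      rw [Ideal.mem_comap, hQa, algebraMap_smul, smul_comm]
      exact N.smul_mem a (mem_N.mpr (le_ofPrime _ _ (le_integralTransform R
        (mem_bot_iff.mp (hk r hr)))))
    exact ((maximalIdeal.isMaximal _).eq_of_le (Ideal.comap_ne_top _ hQ.ne_top)
      (Ideal.IsPrime.le_of_pow_le hpow)).symm
  have := isMaximal_of_comap_eq_maximalIdeal hQR
  have hle : Q ≤ center hRO := by
    intro b hb
    by_contra hbn
    exact haw (mem_N.mpr (mem_of_isUnit_of_mul_mem
      (IsLocalization.map_units B.toSubring (⟨b, hbn⟩ : (center hRO).primeCompl))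
      (mem_N.mp ((hQa b).mp hb))))
  refine ⟨a, fun h => haw (mem_N.mpr h), fun b hb => mem_N.mp ((hQa b).mp ?_)⟩
  rwa [this.eq_of_le (Ideal.IsPrime.ne_top inferInstance) hle]

lemma isDiscreteValuationRing_ofPrime_center (hRO : R ≤ O) {w : K}
    (hw : w ∈ idealTransform (maximalIdeal R.toSubring) K) (hwO : w ∉ O.toSubring) :
    IsDiscreteValuationRing (ofPrime (integralTransform R) (center hRO)).toSubring := by
  obtain ⟨a, haw, hcenter⟩ := exists_forall_mem_center_smul_mem hRO hw hwO
  refine isDiscreteValuationRing_of_smul_mem_bot (K := K) (u := a • w) (fun hintegral => haw ?_) ?_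
  · obtain ⟨s, hs⟩ := hintegral.exists_multiple_integral_of_isLocalization (center hRO).primeCompl
    refine mem_ofPrime.mpr ⟨s, s.2, ?_, isIntegral_trans (R := R.toSubring) _ hs⟩
    exact mul_mem (SetLike.coe_mem s.1).1 (mul_mem a.2.1 hw)
  · let J : Ideal (ofPrime (integralTransform R) (center hRO)).toSubring :=
      (Subalgebra.toSubmodule ⊥).comap (LinearMap.toSpanSingleton _ K (a • w))
    change _ ≤ J
    rw [← IsLocalization.AtPrime.map_eq_maximalIdeal (center hRO)]
    exact Ideal.map_le_iff_le_comap.mpr fun b hb => mem_bot_iff.mpr (hcenter b hb)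

lemma ofPrime_center_eq (hRO : R ≤ O) {w : K}
    (hw : w ∈ idealTransform (maximalIdeal R.toSubring) K) (hwO : w ∉ O.toSubring) :
    ofPrime (integralTransform R) (center hRO) = O :=
  have := isDiscreteValuationRing_ofPrime_center hRO hw hwO
  eq_of_le_of_valuationRing (ofPrime_center_le hRO)

lemma isDiscreteValuationRing_of_mem_idealTransform (hRO : R ≤ O) {w : K}
    (hw : w ∈ idealTransform (maximalIdeal R.toSubring) K) (hwO : w ∉ O.toSubring) :
    IsDiscreteValuationRing O.toSubring :=
  ofPrime_center_eq hRO hw hwO ▸ isDiscreteValuationRing_ofPrime_center hRO hw hwO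

lemma finite_setOf_comap_eq_maximalIdeal (R : LocalSubring K) [IsNoetherianRing R.toSubring]
    [IsFractionRing R.toSubring K] : {Q : Ideal (integralTransform R) | Q.IsPrime ∧
      Q.comap (algebraMap R.toSubring (integralTransform R)) =
        maximalIdeal R.toSubring}.Finite := by
  refine (Ideal.finite_minimalPrimes_of_isNoetherianRing _
    ((maximalIdeal R.toSubring).map (algebraMap _ (integralTransform R)))).subset ?_
  rintro Q ⟨hQ, hQR⟩
  refine ⟨⟨hQ, Ideal.map_le_iff_le_comap.mpr hQR.ge⟩, fun Q' ⟨hQ', hQ'R⟩ hle => ?_⟩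
  have : Q'.IsMaximal := isMaximal_of_comap_eq_maximalIdeal
    ((maximalIdeal.isMaximal _).eq_of_le (Ideal.comap_ne_top _ hQ'.ne_top)
      (Ideal.map_le_iff_le_comap.mp hQ'R)).symm
  exact (this.eq_of_le hQ.ne_top hle).ge

lemma finite_setOf_not_idealTransform_le (R : LocalSubring K) [IsNoetherianRing R.toSubring]
    [IsFractionRing R.toSubring K] :
    {O : LocalSubring K | R ≤ O ∧ IsIntegrallyClosedIn O.toSubring K ∧
      ∃ w ∈ idealTransform (maximalIdeal R.toSubring) K, w ∉ O.toSubring}.Finite := by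
  classical
  refine ((finite_setOf_comap_eq_maximalIdeal R).dependent_image
    fun Q hQ => have := hQ.1; ofPrime (integralTransform R) Q).subset ?_
  rintro O ⟨hRO, _, w, hw, hwO⟩
  exact ⟨center hRO, ⟨inferInstance, comap_center hRO⟩, ofPrime_center_eq hRO hw hwO⟩

lemma exists_sub_inclusion_mem_maximalIdeal (hRO : R ≤ O) {w : K}
    (hw : w ∈ idealTransform (maximalIdeal R.toSubring) K) (hwO : w ∉ O.toSubring)
    (o : O.toSubring) : ∃ b : integralTransform R,
      o - Subring.inclusion (integralTransform_le hRO) b ∈ maximalIdeal O.toSubring := by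
  have ho : (o : K) ∈ (ofPrime (integralTransform R) (center hRO)).toSubring := by
    rw [ofPrime_center_eq hRO hw hwO]
    exact o.2
  obtain ⟨s, hs, hso⟩ := mem_ofPrime.mp ho
  obtain ⟨c, i, hi, hcs⟩ :=
    (isMaximal_of_comap_eq_maximalIdeal (comap_center hRO)).exists_inv hs
  refine ⟨c * ⟨s • o, hso⟩, ?_⟩
  have heq : o - Subring.inclusion (integralTransform_le hRO) (c * ⟨s • o, hso⟩) =
      Subring.inclusion (integralTransform_le hRO) i * o := by
    have hcs' : (c * s + i : K) = 1 := congrArg Subtype.val hcs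
    refine Subtype.ext ?_
    change (o : K) - c * (s * o) = i * o
    linear_combination -(o : K) * hcs'
  exact heq ▸ Ideal.mul_mem_right _ _ hi

lemma maximalIdeal_ne_bot_of_notMem {R : Subring K} [IsLocalRing R] [IsFractionRing R K] {w : K}
    (hw : w ∉ R) : maximalIdeal R ≠ ⊥ := fun h =>
  let ⟨r, hr⟩ := IsFractionRing.surjective_iff_isField.mpr (isField_iff_maximalIdeal_eq.mpr h) w
  hw (hr ▸ r.2)

lemma exists_fg_forall_exists_sub_mem_maximalIdeal (hRO : R ≤ O) {w : K}
    (hw : w ∈ idealTransform (maximalIdeal R.toSubring) K) (hwO : w ∉ O.toSubring) :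
    ∃ N : Submodule R.toSubring K, N.FG ∧ (N : Set K) ⊆ O.toSubring ∧
      ∀ o : O.toSubring, ∃ y : O.toSubring, (y : K) ∈ N ∧ o - y ∈ maximalIdeal O.toSubring := by
  obtain ⟨x, hxR, hx⟩ := Submodule.exists_mem_ne_zero_of_ne_bot
    (maximalIdeal_ne_bot_of_notMem fun h => hwO (hRO.1 h))
  obtain ⟨N, hN, hNC, hmod⟩ := exists_fg_forall_exists_sub_smul_mem
    (C := idealTransform (maximalIdeal R.toSubring) K ⊓ integralClosure R.toSubring K)
    inf_le_left hxR hx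
  refine ⟨N, hN, fun y hy => integralTransform_le hRO (hNC hy), fun o => ?_⟩
  obtain ⟨b, hb⟩ := exists_sub_inclusion_mem_maximalIdeal hRO hw hwO o
  obtain ⟨c, hc, hbc⟩ := hmod b b.2
  have := hRO.2
  have hxO : Subring.inclusion hRO.1 x ∈ maximalIdeal O.toSubring :=
    (maximalIdeal_comap (Subring.inclusion hRO.1)).ge hxR
  refine ⟨⟨b - x • c, integralTransform_le hRO (hNC hbc)⟩, hbc, ?_⟩
  have heq : o - ⟨b - x • c, integralTransform_le hRO (hNC hbc)⟩ =
      (o - Subring.inclusion (integralTransform_le hRO) b) +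
        Subring.inclusion hRO.1 x * ⟨c, integralTransform_le hRO hc⟩ :=
    Subtype.ext (sub_add (o : K) b (x • c)).symm
  exact heq ▸ add_mem hb (Ideal.mul_mem_right _ _ hxO)

end IntegralTransform

end LocalSubring

section WeaklyAssociatedPrimes

variable {R M : Type*} [CommRing R] [AddCommGroup M] [Module R M] {N : Submodule R M} {P : Ideal R}

lemma exists_notMem_forall_smul_mem [P.IsPrime] {L : Submodule R M} (hL : L.FG)
    (h : ∀ y ∈ L, ∃ s ∉ P, s • y ∈ N) : ∃ s ∉ P, ∀ y ∈ L, s • y ∈ N := by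
  induction L, hL using Submodule.fg_induction with
  | singleton y =>
    obtain ⟨s, hs, hsy⟩ := h y (Submodule.mem_span_singleton_self y)
    refine ⟨s, hs, fun z hz => ?_⟩
    obtain ⟨r, rfl⟩ := Submodule.mem_span_singleton.mp hz
    exact smul_comm r s y ▸ N.smul_mem r hsy
  | sup L₁ L₂ _ _ ih₁ ih₂ =>
    obtain ⟨s, hs, hsL⟩ := ih₁ fun y hy => h y (Submodule.mem_sup_left hy)
    obtain ⟨t, ht, htL⟩ := ih₂ fun y hy => h y (Submodule.mem_sup_right hy)
    refine ⟨s * t, P.primeCompl.mul_mem hs ht, fun y hy => ?_⟩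
    obtain ⟨y₁, hy₁, y₂, hy₂, rfl⟩ := Submodule.mem_sup.mp hy
    rw [smul_add]
    exact add_mem (by rw [mul_comm, mul_smul]; exact N.smul_mem t (hsL y₁ hy₁))
      (by rw [mul_smul]; exact N.smul_mem s (htL y₂ hy₂))

/-- The weakly associated primes of `M ⧸ N`: the primes which are minimal over the annihilator of
the class of some element of `M`. -/
def weaklyAssociatedPrimes (N : Submodule R M) : Set (Ideal R) :=
  {P | ∃ y, P ∈ (N.colon {y}).minimalPrimes}

lemma isPrime_of_mem_weaklyAssociatedPrimes (hP : P ∈ weaklyAssociatedPrimes N) : P.IsPrime :=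
  let ⟨_, hy⟩ := hP
  hy.1.1

lemma le_of_mem_weaklyAssociatedPrimes {I : Ideal R} (hP : P ∈ weaklyAssociatedPrimes I) :
    I ≤ P := fun _ ha =>
  let ⟨y, hy⟩ := hP
  hy.1.2 (Submodule.mem_colon_singleton.mpr (I.mul_mem_right y ha))

lemma mem_of_forall_mem_weaklyAssociatedPrimes {y : M}
    (h : ∀ P ∈ weaklyAssociatedPrimes N, ∃ s ∉ P, s • y ∈ N) : y ∈ N := by
  by_contra hy
  have hne : N.colon {y} ≠ ⊤ := fun htop => hy <| by
    simpa [Submodule.mem_colon_singleton] using (Ideal.eq_top_iff_one _).mp htop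
  obtain ⟨P, hP⟩ := Ideal.nonempty_minimalPrimes hne
  obtain ⟨s, hs, hsy⟩ := h P ⟨y, hP⟩
  exact hs (hP.1.2 (Submodule.mem_colon_singleton.mpr hsy))

lemma exists_pow_smul_mem_of_mem_weaklyAssociatedPrimes (hP : P ∈ weaklyAssociatedPrimes N)
    {I : Ideal R} (hI : I.FG) (hIP : I ≤ P) :
    ∃ y k, (∀ s : R, s • y ∈ N → s ∈ P) ∧ ∀ a ∈ I ^ k, a • y ∈ N := by
  obtain ⟨y, hy⟩ := hP
  have := hy.1.1
  have hrad : I.map (algebraMap R (Localization.AtPrime P)) ≤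
      ((N.colon {y}).map (algebraMap R (Localization.AtPrime P))).radical := by
    rw [IsLocalization.AtPrime.radical_map_of_mem_minimalPrimes _ P _ hy]
    exact Ideal.map_mono hIP
  obtain ⟨k, hk⟩ := Ideal.exists_pow_le_of_le_radical_of_fg hrad (hI.map _)
  obtain ⟨s, hs, hsI⟩ : ∃ s ∉ P, ∀ a ∈ I ^ k, s • a ∈ N.colon {y} := by
    refine exists_notMem_forall_smul_mem (hI.pow (n := k)) fun a ha => ?_
    have hmem : algebraMap R (Localization.AtPrime P) a ∈ (N.colon {y}).map (algebraMap R _) :=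
      hk (Ideal.map_pow (algebraMap R (Localization.AtPrime P)) I k ▸ Ideal.mem_map_of_mem _ ha)
    exact (IsLocalization.algebraMap_mem_map_algebraMap_iff P.primeCompl _ _ _).mp hmem
  refine ⟨s • y, k, fun t ht => ?_, fun a ha => ?_⟩
  · have hts : t * s ∈ P := hy.1.2 (Submodule.mem_colon_singleton.mpr (by rwa [mul_smul]))
    exact (this.mem_or_mem hts).resolve_right hs
  · rw [smul_smul, mul_comm]
    exact Submodule.mem_colon_singleton.mp (hsI a ha)

end WeaklyAssociatedPrimes

section LocalSubring

open LocalSubring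

variable {K : Type*} [Field K]

/-- `G` is generically finite over `A`: some finitely generated `A`-submodule of `G` contains a
multiple of each element of `G` by an element of `A` which is nonzero in `G`. For a domain `G` this
says that the fraction field of `G` is a finite extension of that of the image of `A`. -/
def GenericallyFinite (A G : Type*) [CommRing A] [CommRing G] [Algebra A G] : Prop :=
  ∃ N : Submodule A G, N.FG ∧ ∀ g : G, ∃ a : A, algebraMap A G a ≠ 0 ∧ a • g ∈ N

section IntegralClosure

instance {D : Subring K} [IsIntegrallyClosedIn D K] {P : Ideal D} [P.IsPrime] :
    IsIntegrallyClosedIn (ofPrime D P).toSubring K := by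
  refine Subring.isIntegrallyClosedIn_iff.mpr fun z hz => ?_
  obtain ⟨s, hs⟩ := hz.exists_multiple_integral_of_isLocalization P.primeCompl
  exact mem_ofPrime.mpr ⟨s, s.2, Subring.isIntegrallyClosedIn_iff.mp ‹_› hs⟩

lemma mul_div_mem_iff {D : Subring K} {x : D} (hx : x ≠ 0) (d y : D) :
    d * (y / x : K) ∈ D ↔ d • y ∈ Ideal.span {x} := by
  have hxK : (x : K) ≠ 0 := by exact_mod_cast hx
  rw [Ideal.mem_span_singleton, ← mul_div_assoc]
  constructor
  · exact fun h => ⟨⟨_, h⟩, Subtype.ext (mul_div_cancel₀ _ hxK).symm⟩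
  · rintro ⟨c, hc⟩
    have hcK : (d * y : K) = x * c := congrArg Subtype.val hc
    rw [hcK, mul_div_cancel_left₀ _ hxK]
    exact c.2

lemma exists_notMem_forall_smul_mem_of_mem_ofPrime {E : Subring K} {p : Ideal E} [p.IsPrime]
    {L : Submodule E K} (hL : L.FG) (h : ∀ y ∈ L, y ∈ (ofPrime E p).toSubring) :
    ∃ s ∉ p, ∀ y ∈ L, s • y ∈ E := by
  simp only [← mem_bot_iff (B := E)]
  exact exists_notMem_forall_smul_mem (N := Subalgebra.toSubmodule ⊥) hL fun y hy =>
    let ⟨s, hs, hsy⟩ := mem_ofPrime.mp (h y hy)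
    ⟨s, hs, mem_bot_iff.mpr hsy⟩

lemma exists_notMem_smul_mem_span_of_mem_span_ofPrime {E : Subring K} {p : Ideal E} [p.IsPrime]
    {S : Set K} {y : K} (hy : y ∈ Submodule.span (ofPrime E p).toSubring S) :
    ∃ s ∉ p, s • y ∈ Submodule.span E S := by
  obtain ⟨y', hy', s, rfl⟩ := (IsLocalization.mem_span_iff p.primeCompl).mp hy
  refine ⟨s, s.2, ?_⟩
  rwa [← algebraMap_smul (ofPrime E p).toSubring, smul_smul, IsLocalization.mk'_spec', map_one,
    one_smul]

section AssociatedPrimes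

variable {E : Subring K} [IsNoetherianRing E] {p : Ideal E} [p.IsPrime]

lemma exists_forall_mem_iff_smul_mem_bot {w : K}
    (hw : w ∈ idealTransform (maximalIdeal (ofPrime E p).toSubring) K)
    (hwp : w ∉ (ofPrime E p).toSubring) :
    ∃ u : K, ∀ b : E, b ∈ p ↔ b • u ∈ (⊥ : Subalgebra E K) := by
  let N : Submodule E K :=
    (Subalgebra.toSubmodule (⊥ : Subalgebra (ofPrime E p).toSubring K)).restrictScalars _
  have mem_N {z : K} : z ∈ N ↔ z ∈ (ofPrime E p).toSubring := mem_bot_iff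
  obtain ⟨Q, a, hQ, hQa⟩ := exists_isPrime_forall_mem_iff_smul_mem (N := N) (w := w)
    fun hwN => hwp (mem_N.mp hwN)
  have hpQ : p ≤ Q := fun b hb => by
    obtain ⟨k, hk⟩ := hw
    have hbk : b ^ k • w ∈ N := mem_N.mpr <| mem_bot_iff.mp <| hk _ <|
      Ideal.pow_mem_pow (inclusion_mem_maximalIdeal_ofPrime.mpr hb) k
    refine hQ.mem_of_pow_mem k ((hQa _).mpr ?_)
    exact smul_comm a (b ^ k) w ▸ N.smul_mem a hbk
  obtain ⟨s, hs, hsp⟩ := exists_notMem_forall_smul_mem_of_mem_ofPrime (p := p)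
    ((IsNoetherian.noetherian p).map (LinearMap.toSpanSingleton E K (a • w))) <| by
      rintro _ ⟨b, hb, rfl⟩
      exact mem_N.mp ((hQa b).mp (hpQ hb))
  refine ⟨s • a • w, fun b => ⟨fun hb => ?_, fun hb => by_contra fun hbp => ?_⟩⟩
  · exact smul_comm s b (a • w) ▸ mem_bot_iff.mpr (hsp _ (Submodule.mem_map_of_mem hb))
  · refine hQ.ne_top ((Ideal.eq_top_iff_one _).mpr ((hQa 1).mpr (mem_N.mpr ?_)))
    refine mem_ofPrime.mpr ⟨b * s, p.primeCompl.mul_mem hbp hs, ?_⟩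
    rw [one_smul, mul_smul]
    exact mem_bot_iff.mp hb

lemma mem_associatedPrimes_of_forall_mem_iff {x : E} (hx : x ≠ 0) (hxp : x ∈ p) {u : K}
    (hu : ∀ b : E, b ∈ p ↔ b • u ∈ (⊥ : Subalgebra E K)) :
    p ∈ associatedPrimes E (E ⧸ Ideal.span {x}) := by
  have hxK : (x : K) ≠ 0 := by exact_mod_cast hx
  let y : E := ⟨x * u, mem_bot_iff.mp ((hu x).mp hxp)⟩
  refine isAssociatedPrime_iff.mpr ⟨inferInstance, Ideal.Quotient.mk _ y, ?_⟩
  have hyx : (y / x : K) = u := mul_div_cancel_left₀ u hxK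
  ext b
  rw [hu, mem_bot_iff, Submodule.mem_colon_singleton, ← hyx, Subring.smul_def, smul_eq_mul,
    mul_div_mem_iff hx, ← Ideal.Quotient.eq_zero_iff_mem, smul_eq_mul, map_mul]
  rfl

end AssociatedPrimes

variable {E D : Subring K} [Algebra E D] [IsScalarTower E D K]

lemma coe_algebraMap (e : E) : (algebraMap E D e : K) = e :=
  (IsScalarTower.algebraMap_apply E D K e).symm

lemma ofPrime_comap_le (P : Ideal D) [P.IsPrime] :
    ofPrime E (P.comap (algebraMap E D)) ≤ ofPrime D P := by
  have hle : E ≤ (ofPrime D P).toSubring := fun e he =>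
    le_ofPrime D P ((coe_algebraMap (D := D) ⟨e, he⟩).subst (SetLike.coe_mem _))
  refine ofPrime_le hle ?_
  ext e
  rw [Ideal.mem_comap, Ideal.mem_comap, ← inclusion_mem_maximalIdeal_ofPrime (P := P)]
  exact iff_of_eq (congrArg (· ∈ _) (Subtype.ext (coe_algebraMap (D := D) e)))

variable [IsNoetherianRing E] [IsFractionRing E K] [Algebra.IsIntegral E D] {x : E} {P : Ideal D}

lemma exists_mem_idealTransform_notMem_ofPrime [IsIntegrallyClosedIn D K] (hx : x ≠ 0) [P.IsPrime]
    (hP : P ∈ weaklyAssociatedPrimes (Ideal.span {algebraMap E D x})) :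
    ∃ w ∈ idealTransform (maximalIdeal (ofPrime E (P.comap (algebraMap E D))).toSubring) K,
      w ∉ (ofPrime D P).toSubring := by
  set p := P.comap (algebraMap E D)
  by_contra! hle
  obtain ⟨y, k, hy, hyk⟩ := exists_pow_smul_mem_of_mem_weaklyAssociatedPrimes hP
    (Ideal.FG.map (IsNoetherian.noetherian p) (algebraMap E D)) Ideal.map_comap_le
  have hxD : algebraMap E D x ≠ 0 := fun h =>
    hx (Subtype.ext ((coe_algebraMap (D := D) x).symm.trans (congrArg Subtype.val h)))
  let z : K := y / algebraMap E D x
  have hintegral : ∀ a ∈ maximalIdeal (ofPrime E p).toSubring ^ k,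
      IsIntegral (ofPrime E p).toSubring (a • z) := by
    let J : Ideal (ofPrime E p).toSubring :=
      (Subalgebra.toSubmodule (integralClosure (ofPrime E p).toSubring K)).comap
        (LinearMap.toSpanSingleton _ K z)
    change _ ≤ J
    rw [← IsLocalization.AtPrime.map_eq_maximalIdeal p, ← Ideal.map_pow]
    refine Ideal.map_le_iff_le_comap.mpr fun e he => ?_
    have hD : algebraMap E D e * z ∈ D := (mul_div_mem_iff hxD _ _).mpr <|
      hyk _ (Ideal.map_pow (algebraMap E D) p k ▸ Ideal.mem_map_of_mem _ he)
    have hEz : IsIntegral E (algebraMap E D e * z) := (isIntegral_algebraMap_iff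
      (B := K) Subtype.val_injective).mpr (Algebra.IsIntegral.isIntegral (⟨_, hD⟩ : D))
    rw [coe_algebraMap] at hEz
    exact hEz.tower_top
  have hz : z ∈ (ofPrime D P).toSubring :=
    Subring.integralClosure_subring_le_iff.mpr hle
      (isIntegral_idealTransform_of_pow_smul_isIntegral hintegral)
  obtain ⟨s, hs, hsz⟩ := mem_ofPrime.mp hz
  exact hs (hy s ((mul_div_mem_iff hxD s y).mp hsz))

lemma isDiscreteValuationRing_localization_of_mem_weaklyAssociatedPrimes
    [IsIntegrallyClosedIn D K] (hx : x ≠ 0) [P.IsPrime]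
    (hP : P ∈ weaklyAssociatedPrimes (Ideal.span {algebraMap E D x})) :
    IsDiscreteValuationRing (Localization.AtPrime P) := by
  obtain ⟨w, hw, hwO⟩ := exists_mem_idealTransform_notMem_ofPrime hx hP
  have := isDiscreteValuationRing_of_mem_idealTransform (ofPrime_comap_le P) hw hwO
  exact IsDiscreteValuationRing.RingEquivClass.isDiscreteValuationRing (ofPrimeEquiv D P).symm

lemma finite_setOf_mem_weaklyAssociatedPrimes_comap_eq [IsIntegrallyClosedIn D K] (hx : x ≠ 0)
    (p : Ideal E) [p.IsPrime] :
    {P ∈ weaklyAssociatedPrimes (Ideal.span {algebraMap E D x}) |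
      P.comap (algebraMap E D) = p}.Finite := by
  classical
  refine ((finite_setOf_not_idealTransform_le (ofPrime E p)).image
    fun O : LocalSubring K => if h : D ≤ O.toSubring then
      (maximalIdeal O.toSubring).comap (Subring.inclusion h) else ⊤).subset ?_
  rintro P ⟨hP, rfl⟩
  have := isPrime_of_mem_weaklyAssociatedPrimes hP
  exact ⟨ofPrime D P,
    ⟨ofPrime_comap_le P, inferInstance, exists_mem_idealTransform_notMem_ofPrime hx hP⟩,
    (dif_pos (le_ofPrime D P)).trans (Ideal.ext fun d => inclusion_mem_maximalIdeal_ofPrime)⟩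

lemma finite_weaklyAssociatedPrimes_span_singleton [IsIntegrallyClosedIn D K] (hx : x ≠ 0) :
    (weaklyAssociatedPrimes (Ideal.span {algebraMap E D x})).Finite := by
  refine .of_finite_fibers (Ideal.comap (algebraMap E D))
    ((associatedPrimes.finite E (E ⧸ Ideal.span {x})).subset ?_) ?_
  · rintro _ ⟨P, hP, rfl⟩
    have := isPrime_of_mem_weaklyAssociatedPrimes hP
    obtain ⟨w, hw, hwO⟩ := exists_mem_idealTransform_notMem_ofPrime hx hP
    obtain ⟨u, hu⟩ := exists_forall_mem_iff_smul_mem_bot hw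
      fun hwp => hwO ((ofPrime_comap_le P).1 hwp)
    exact mem_associatedPrimes_of_forall_mem_iff hx
      (le_of_mem_weaklyAssociatedPrimes hP (Ideal.mem_span_singleton_self _)) hu
  · rintro _ ⟨P, hP, rfl⟩
    have := isPrime_of_mem_weaklyAssociatedPrimes hP
    exact finite_setOf_mem_weaklyAssociatedPrimes_comap_eq hx _

lemma exists_fg_forall_exists_smul_sub_mem [IsIntegrallyClosedIn D K] (hx : x ≠ 0) [P.IsPrime]
    (hP : P ∈ weaklyAssociatedPrimes (Ideal.span {algebraMap E D x})) :
    ∃ L : Submodule E D, L.FG ∧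
      ∀ d, ∃ z ∉ P.comap (algebraMap E D), ∃ y ∈ L, z • d - y ∈ P := by
  obtain ⟨w, hw, hwO⟩ := exists_mem_idealTransform_notMem_ofPrime hx hP
  obtain ⟨_, ⟨S, rfl⟩, hSO, hres⟩ :=
    exists_fg_forall_exists_sub_mem_maximalIdeal (ofPrime_comap_le P) hw hwO
  obtain ⟨s, hs, hsS⟩ := exists_notMem_forall_smul_mem_of_mem_ofPrime (p := P) ⟨S, rfl⟩ <| by
    let N : Submodule D K :=
      (Subalgebra.toSubmodule (⊥ : Subalgebra (ofPrime D P).toSubring K)).restrictScalars D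
    exact fun y hy => mem_bot_iff.mp <| (Submodule.span_le (p := N)).mpr
      (fun t ht => mem_bot_iff.mpr (hSO (Submodule.subset_span ht))) hy
  let ι : D →ₗ[E] K := (Algebra.linearMap D K).restrictScalars E
  let L : Submodule E K := (Submodule.span E (S : Set K)).map (Algebra.lsmul E E K (s : K))
  have hL : L.FG := Submodule.FG.map _ ⟨S, rfl⟩
  refine ⟨L.comap ι, Submodule.fg_of_fg_map_injective ι Subtype.val_injective
    (hL.of_le (Submodule.map_comap_le ι L)), fun d => ?_⟩
  have hsK : (s : K) ≠ 0 := fun h => hs (by rw [ZeroMemClass.coe_eq_zero.mp h]; exact P.zero_mem)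
  have hsd : s • (d / s : K) = d := mul_div_cancel₀ _ hsK
  have hdO : (d / s : K) ∈ (ofPrime D P).toSubring :=
    mem_ofPrime.mpr ⟨s, hs, hsd.symm.subst d.2⟩
  obtain ⟨y, hyS, hy⟩ := hres ⟨d / s, hdO⟩
  obtain ⟨z, hz, hzy⟩ := exists_notMem_smul_mem_span_of_mem_span_ofPrime hyS
  have hsD := hsS _ (Submodule.span_subset_span E D _ hzy)
  refine ⟨z, hz, ⟨_, hsD⟩, ⟨_, hzy, rfl⟩, inclusion_mem_maximalIdeal_ofPrime.mp ?_⟩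
  have heq : Subring.inclusion (le_ofPrime D P) (z • d - ⟨_, hsD⟩) =
      Subring.inclusion (le_ofPrime D P) (algebraMap E D z * s) * (⟨d / s, hdO⟩ - y) := by
    refine Subtype.ext ?_
    change ((z • d : D) : K) - s * (z * y) = (algebraMap E D z * s : K) * (d / s - y)
    rw [Algebra.smul_def, Subring.coe_mul, coe_algebraMap]
    field_simp
  exact heq ▸ Ideal.mul_mem_left _ _ hy

lemma genericallyFinite_quotient [IsIntegrallyClosedIn D K] (hx : x ≠ 0)
    (hP : P ∈ weaklyAssociatedPrimes (Ideal.span {algebraMap E D x})) :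
    GenericallyFinite E (D ⧸ P) := by
  have := isPrime_of_mem_weaklyAssociatedPrimes hP
  obtain ⟨L, hL, hmod⟩ := exists_fg_forall_exists_smul_sub_mem hx hP
  refine ⟨L.map (Ideal.Quotient.mkₐ E P).toLinearMap, hL.map _, fun g => ?_⟩
  obtain ⟨d, rfl⟩ := Ideal.Quotient.mk_surjective g
  obtain ⟨z, hz, y, hy, hzy⟩ := hmod d
  exact ⟨z, fun h => hz (Ideal.mem_comap.mpr (Ideal.Quotient.eq_zero_iff_mem.mp h)), y, hy,
    (Ideal.Quotient.eq.mpr hzy).symm⟩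

end IntegralClosure

end LocalSubring

section Devissage

lemma isNoetherian_quotient_of_ker_le {A R M Q : Type*} [CommRing A] [CommRing R] [AddCommGroup M]
    [AddCommGroup Q] [Algebra A R] [Module A M] [Module A Q] [Module R M] [Module R Q]
    [IsScalarTower A R M] [IsScalarTower A R Q] {N L : Submodule R M} (hNL : N ≤ L) (φ : L →ₗ[R] Q)
    (hφ : φ.ker ≤ N.comap L.subtype) [IsNoetherian A (M ⧸ L)] [IsNoetherian A Q] :
    IsNoetherian A (M ⧸ N) := by
  let ψ : (L ⧸ φ.ker) →ₗ[R] Q := φ.ker.liftQ φ le_rfl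
  have hψ : Function.Injective ψ :=
    LinearMap.ker_eq_bot.mp (Submodule.ker_liftQ_eq_bot _ _ _ le_rfl)
  have : IsNoetherian A (L ⧸ φ.ker) := isNoetherian_of_injective (ψ.restrictScalars A) hψ
  refine isNoetherian_of_range_eq_ker ((φ.ker.mapQ N L.subtype hφ).restrictScalars A)
    ((Submodule.factor hNL).restrictScalars A) (SetLike.ext' ?_)
  change ((φ.ker.mapQ N L.subtype hφ).range : Set (M ⧸ N)) = (Submodule.factor hNL).ker
  rw [Submodule.range_mapQ, Submodule.factor, Submodule.ker_mapQ, Submodule.range_subtype,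
    Submodule.comap_id]

variable {D : Type*} [CommRing D]

lemma algebraMap_localization_dvd_iff {P : Ideal D} [P.IsPrime] {x g : D} :
    algebraMap D (Localization.AtPrime P) x ∣ algebraMap D (Localization.AtPrime P) g ↔
      ∃ s ∉ P, x ∣ s * g := by
  rw [← Ideal.mem_span_singleton, ← Set.image_singleton, ← Ideal.map_span,
    IsLocalization.algebraMap_mem_map_algebraMap_iff P.primeCompl]
  simp only [Ideal.mem_span_singleton]
  rfl

variable [IsDomain D]

section DiscreteValuationRing

variable {P : Ideal D} [P.IsPrime] [IsDiscreteValuationRing (Localization.AtPrime P)]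

lemma exists_mem_ne_zero_forall_exists_dvd_mul :
    ∃ t ∈ P, t ≠ 0 ∧ ∀ q ∈ P, ∃ s ∉ P, t ∣ s * q := by
  obtain ⟨ϖ, hϖ⟩ := IsDiscreteValuationRing.exists_irreducible (Localization.AtPrime P)
  obtain ⟨⟨t, s⟩, hts⟩ := IsLocalization.surj P.primeCompl ϖ
  have hassoc : Associated ϖ (algebraMap D (Localization.AtPrime P) t) :=
    ⟨(IsLocalization.map_units _ s).unit, hts⟩
  have ht : Irreducible (algebraMap D (Localization.AtPrime P) t) := hassoc.irreducible hϖ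
  refine ⟨t, ?_, fun h => ht.ne_zero (by rw [h, map_zero]), fun q hq => ?_⟩
  · exact (IsLocalization.AtPrime.to_map_mem_maximal_iff _ P t).mp ht.not_isUnit
  · refine algebraMap_localization_dvd_iff.mp (Ideal.mem_span_singleton.mp ?_)
    rw [← ht.maximalIdeal_eq]
    exact (IsLocalization.AtPrime.to_map_mem_maximal_iff _ P q).mpr hq

lemma exists_notMem_dvd_mul_pow {x t : D} (hx : x ≠ 0) (ht : t ∈ P) :
    ∃ n, ∃ s ∉ P, x ∣ s * t ^ n := by
  obtain ⟨ϖ, hϖ⟩ := IsDiscreteValuationRing.exists_irreducible (Localization.AtPrime P)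
  obtain ⟨n, hn⟩ := IsDiscreteValuationRing.associated_pow_irreducible
    (map_ne_zero_of_mem_nonZeroDivisors _ (IsLocalization.injective (Localization.AtPrime P)
      P.primeCompl_le_nonZeroDivisors) (mem_nonZeroDivisors_of_ne_zero hx)) hϖ
  refine ⟨n, algebraMap_localization_dvd_iff.mp (hn.dvd.trans ?_)⟩
  rw [map_pow]
  refine pow_dvd_pow_of_dvd (Ideal.mem_span_singleton.mp ?_) n
  rw [← hϖ.maximalIdeal_eq]
  exact (IsLocalization.AtPrime.to_map_mem_maximal_iff _ P t).mpr ht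

lemma exists_mem_notMem_of_ne {Q : Ideal D} [Q.IsPrime]
    [IsDiscreteValuationRing (Localization.AtPrime Q)] (hne : Q ≠ P) : ∃ c ∈ Q, c ∉ P := by
  by_contra! hle
  obtain ⟨t, ht, htQ⟩ := SetLike.exists_of_lt (lt_of_le_of_ne hle hne)
  obtain ⟨q, hq, hq0, -⟩ := exists_mem_ne_zero_forall_exists_dvd_mul (P := Q)
  obtain ⟨n, s, hs, hqs⟩ := exists_notMem_dvd_mul_pow hq0 ht
  exact Ideal.IsPrime.mul_notMem inferInstance (fun h => hs (hle _ h))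
    (fun h => htQ (Ideal.IsPrime.mem_of_pow_mem inferInstance n h)) (Ideal.mem_of_dvd _ hqs hq)

end DiscreteValuationRing

lemma exists_notMem_forall_dvd_mul {S : Set (Ideal D)} (hS : S.Finite)
    (hprime : ∀ P ∈ S, P.IsPrime)
    (hdvr : ∀ P (hP : P ∈ S), have := hprime P hP;
      IsDiscreteValuationRing (Localization.AtPrime P))
    {x : D} (hx : x ≠ 0) (hloc : ∀ b, (∀ P ∈ S, ∃ s ∉ P, x ∣ s * b) → x ∣ b) {P : Ideal D}
    (hP : P ∈ S) : ∃ c ∉ P, ∀ g, (∃ s ∉ P, x ∣ s * g) → x ∣ c * g := by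
  have := hprime P hP
  have hsep : ∀ Q : S, Q.1 ≠ P → ∃ c ∉ P, ∃ s ∉ Q.1, x ∣ s * c := by
    rintro ⟨Q, hQ⟩ hne
    have := hprime Q hQ
    have := hdvr P hP
    have := hdvr Q hQ
    obtain ⟨c, hcQ, hcP⟩ := exists_mem_notMem_of_ne hne
    obtain ⟨n, hn⟩ := exists_notMem_dvd_mul_pow hx hcQ
    exact ⟨c ^ n, fun h => hcP (Ideal.IsPrime.mem_of_pow_mem inferInstance n h), hn⟩
  choose! c hcP hcQ using hsep
  have := hS.fintype
  classical
  refine ⟨∏ Q with Q.1 ≠ P, c Q, ?_, fun g ⟨s, hs, hsg⟩ => hloc _ fun Q hQ => ?_⟩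
  · exact P.primeCompl.prod_mem fun Q hQ => hcP Q (Finset.mem_filter.mp hQ).2
  obtain rfl | hne := eq_or_ne Q P
  · exact ⟨s, hs, mul_left_comm s _ g ▸ hsg.mul_left _⟩
  · obtain ⟨s', hs', hs'c⟩ := hcQ ⟨Q, hQ⟩ hne
    refine ⟨s', hs', hs'c.trans (mul_dvd_mul_left s' (.mul_right ?_ g))⟩
    exact Finset.dvd_prod_of_mem c (Finset.mem_filter.mpr ⟨Finset.mem_univ _, hne⟩)

variable {A : Type*} [CommRing A] [Algebra A D]

lemma isNoetherian_quotient_colon_of_mul {P : Ideal D} {x t g : D} (hx : x ≠ 0)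
    (hdvd : ∀ f, ∀ y ∈ P, t * g * f = x * y → x ∣ g * f) [IsNoetherian A (D ⧸ P)]
    [IsNoetherian A (D ⧸ (Ideal.span {x}).colon {t * g})] :
    IsNoetherian A (D ⧸ (Ideal.span {x}).colon {g}) := by
  let J := (Ideal.span {x}).colon {t * g}
  let toSpan : J →ₗ[D] Ideal.span {x} :=
    ((LinearMap.toSpanSingleton D D (t * g)).comp J.subtype).codRestrict _
      fun f => Submodule.mem_colon_singleton.mp f.2
  let divX : Ideal.span {x} ≃ₗ[D] D := (LinearEquiv.toSpanNonzeroSingleton D D x hx).symm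
  refine isNoetherian_quotient_of_ker_le (L := J) (Q := D ⧸ P) (fun f hf => ?_)
    (P.mkQ ∘ₗ divX.toLinearMap ∘ₗ toSpan) fun f hf => ?_
  · rw [Submodule.mem_colon_singleton] at hf ⊢
    rw [smul_eq_mul, mul_left_comm]
    exact Ideal.mul_mem_left _ t hf
  · have hP : divX (toSpan f) ∈ P := (Submodule.Quotient.mk_eq_zero P).mp hf
    have heq : divX (toSpan f) * x = f * (t * g) :=
      congrArg Subtype.val (divX.symm_apply_apply (toSpan f))
    refine Submodule.mem_colon_singleton.mpr (Ideal.mem_span_singleton.mpr ?_)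
    rw [smul_eq_mul, mul_comm]
    exact hdvd f _ hP (by linear_combination -heq)

lemma isNoetherian_quotient_colon {P : Ideal D} [P.IsPrime]
    [IsDiscreteValuationRing (Localization.AtPrime P)] {x c : D} (hx : x ≠ 0) (hc : c ∉ P)
    (hcx : ∀ g, (∃ s ∉ P, x ∣ s * g) → x ∣ c * g) [IsNoetherian A (D ⧸ P)] :
    IsNoetherian A (D ⧸ (Ideal.span {x}).colon {c}) := by
  obtain ⟨t, htP, ht, hPt⟩ := exists_mem_ne_zero_forall_exists_dvd_mul (P := P)
  obtain ⟨n, hn⟩ := exists_notMem_dvd_mul_pow hx htP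
  have hstep (k : ℕ) (hk : IsNoetherian A (D ⧸ (Ideal.span {x}).colon {t ^ (k + 1) * c})) :
      IsNoetherian A (D ⧸ (Ideal.span {x}).colon {t ^ k * c}) := by
    rw [pow_succ', mul_assoc] at hk
    refine isNoetherian_quotient_colon_of_mul (P := P) (t := t) hx fun f y hy hfy => ?_
    obtain ⟨s, hs, r, hr⟩ := hPt y hy
    have hsf : s * c * (t ^ k * f) = x * r :=
      mul_left_cancel₀ ht (by linear_combination s * hfy + x * hr)
    rw [mul_comm (t ^ k), mul_assoc]
    exact hcx _ ⟨s * c, P.primeCompl.mul_mem hs hc, r, hsf⟩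
  have hn : IsNoetherian A (D ⧸ (Ideal.span {x}).colon {t ^ n * c}) := by
    have htop : (Ideal.span {x}).colon {t ^ n * c} = ⊤ := by
      rw [Ideal.eq_top_iff_one, Submodule.mem_colon_singleton, one_smul, Ideal.mem_span_singleton,
        mul_comm]
      exact hcx _ hn
    have := Submodule.Quotient.subsingleton_iff.mpr htop
    infer_instance
  have h0 : IsNoetherian A (D ⧸ (Ideal.span {x}).colon {t ^ 0 * c}) :=
    Nat.decreasingInduction
      (motive := fun k _ => IsNoetherian A (D ⧸ (Ideal.span {x}).colon {t ^ k * c}))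
      (fun k _ hk => hstep k hk) hn (Nat.zero_le n)
  rwa [pow_zero, one_mul] at h0

theorem isNoetherian_quotient_span_singleton {S : Set (Ideal D)} (hS : S.Finite)
    (hprime : ∀ P ∈ S, P.IsPrime)
    (hdvr : ∀ P (hP : P ∈ S), have := hprime P hP;
      IsDiscreteValuationRing (Localization.AtPrime P))
    {x : D} (hx : x ≠ 0) (hloc : ∀ b, (∀ P ∈ S, ∃ s ∉ P, x ∣ s * b) → x ∣ b)
    (hnoeth : ∀ P ∈ S, IsNoetherian A (D ⧸ P)) : IsNoetherian A (D ⧸ Ideal.span {x}) := by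
  choose! c hcP hcx using fun P => exists_notMem_forall_dvd_mul (P := P) hS hprime hdvr hx hloc
  have (P : S) : IsNoetherian A (D ⧸ (Ideal.span {x}).colon {c P}) := by
    have := hprime P P.2
    have := hdvr P P.2
    have := hnoeth P P.2
    exact isNoetherian_quotient_colon hx (hcP P P.2) (hcx P P.2)
  have := hS.to_subtype
  let φ : D →ₗ[D] ∀ P : S, D ⧸ (Ideal.span {x}).colon {c P} := LinearMap.pi fun P => Submodule.mkQ _
  have hker : φ.ker = Ideal.span {x} := by
    ext f
    simp only [φ, LinearMap.ker_pi, Submodule.ker_mkQ, Submodule.mem_iInf,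
      Submodule.mem_colon_singleton, Ideal.mem_span_singleton, smul_eq_mul]
    refine ⟨fun h => hloc f fun P hP => ⟨c P, hcP P hP, ?_⟩, fun h P => h.mul_right _⟩
    exact mul_comm f (c P) ▸ h ⟨P, hP⟩
  let ψ := (Ideal.span {x}).liftQ φ hker.ge
  have hψ : Function.Injective ψ :=
    LinearMap.ker_eq_bot.mp (Submodule.ker_liftQ_eq_bot _ _ _ hker.le)
  exact isNoetherian_of_injective (ψ.restrictScalars A) hψ

end Devissage

section GenericallyFinite

lemma exists_mul_eq_algebraMap {A G : Type*} [CommRing A] [CommRing G] [IsDomain G] [Algebra A G]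
    {g : G} (hg0 : g ≠ 0) (hg : IsIntegral A g) :
    ∃ (a : A) (g' : G), algebraMap A G a ≠ 0 ∧ g * g' = algebraMap A G a := by
  obtain ⟨⟨_, a, rfl⟩, hag, ha⟩ := Submodule.exists_mem_ne_zero_of_ne_bot <|
    Ideal.comap_ne_bot_of_integral_mem hg0 (Ideal.mem_span_singleton_self g)
      (hg.tower_top (A := (Algebra.ofId A G).range))
  obtain ⟨g', hg'⟩ := Ideal.mem_span_singleton.mp (Ideal.mem_comap.mp hag)
  exact ⟨a, g', fun h => ha (Subtype.ext h), hg'.symm⟩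

lemma GenericallyFinite.restrictScalars (A : Type*) {E G : Type*} [CommRing A] [CommRing E]
    [CommRing G] [IsDomain G] [Algebra A E] [Algebra A G] [Algebra E G] [IsScalarTower A E G]
    [Module.Finite A E] (h : GenericallyFinite E G) : GenericallyFinite A G := by
  obtain ⟨N, hN, hNG⟩ := h
  refine ⟨N.restrictScalars A, hN.restrictScalars, fun g => ?_⟩
  obtain ⟨e, he, heg⟩ := hNG g
  let ι : E →ₐ[A] G := IsScalarTower.toAlgHom A E G
  obtain ⟨a, ⟨_, e', rfl⟩, ha, hea⟩ := exists_mul_eq_algebraMap (A := A) (g := ι.rangeRestrict e)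
    (fun h => he (congrArg Subtype.val h)) ((Algebra.IsIntegral.isIntegral e).map ι.rangeRestrict)
  have hae : algebraMap E G e * algebraMap E G e' = algebraMap A G a := congrArg Subtype.val hea
  refine ⟨a, fun h => ha (Subtype.ext h), ?_⟩
  have hag : a • g = e' • e • g := by
    rw [Algebra.smul_def, ← hae, smul_smul, Algebra.smul_def, map_mul, mul_comm (algebraMap E G e)]
  exact hag ▸ N.smul_mem e' heg

lemma GenericallyFinite.exists_subalgebra_isFractionRing {A G : Type*} (K : Type*) [CommRing A]
    [CommRing G] [IsDomain G] [Algebra A G] [Algebra.IsIntegral A G] [Field K] [Algebra G K]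
    [IsFractionRing G K] [Algebra A K] [IsScalarTower A G K] (h : GenericallyFinite A G) :
    ∃ E : Subalgebra A K, Module.Finite A E ∧ IsFractionRing E K := by
  obtain ⟨_, ⟨F, rfl⟩, hF⟩ := h
  let E := Algebra.adjoin A (algebraMap G K '' F)
  have hmemE (g : G) : ∃ a : A, algebraMap A K a ≠ 0 ∧ a • algebraMap G K g ∈ E := by
    obtain ⟨a, ha, hag⟩ := hF g
    refine ⟨a, ?_, ?_⟩
    · rw [IsScalarTower.algebraMap_apply A G K]
      exact (map_ne_zero_iff _ (IsFractionRing.injective G K)).mpr ha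
    · refine Algebra.span_le_adjoin A _ ?_
      rw [← IsScalarTower.coe_toAlgHom' A G K, ← map_smul, ← AlgHom.coe_toLinearMap,
        Submodule.span_image]
      exact Submodule.mem_map_of_mem hag
  refine ⟨E, Module.Finite.iff_fg.mpr <| fg_adjoin_of_finite (F.finite_toSet.image _) ?_,
    IsFractionRing.of_field E K fun z => ?_⟩
  · rintro _ ⟨g, -, rfl⟩
    exact (Algebra.IsIntegral.isIntegral g).map (IsScalarTower.toAlgHom A G K)
  obtain ⟨g, h, -, rfl⟩ := IsFractionRing.div_surjective (A := G) z
  obtain ⟨a, ha, hag⟩ := hmemE g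
  obtain ⟨b, hb, hbh⟩ := hmemE h
  refine ⟨b • ⟨_, hag⟩, a • ⟨_, hbh⟩, ?_⟩
  simp only [Algebra.smul_def, map_mul]
  change _ = (algebraMap A K b * (algebraMap A K a * algebraMap G K g)) /
    (algebraMap A K a * (algebraMap A K b * algebraMap G K h))
  field_simp

end GenericallyFinite

section Finiteness

lemma isPrecomplete_of_finite {A M : Type*} [CommRing A] (I : Ideal A) [IsPrecomplete I A]
    [AddCommGroup M] [Module A M] [Module.Finite A M] : IsPrecomplete I M := by
  refine AdicCompletion.of_surjective_iff.mp fun y => ?_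
  obtain ⟨t, rfl⟩ := AdicCompletion.ofTensorProduct_surjective_of_finite I M y
  induction t with
  | zero => exact ⟨0, by simp only [map_zero]⟩
  | add t u ht hu =>
    obtain ⟨⟨x, hx⟩, ⟨z, hz⟩⟩ := And.intro ht hu
    exact ⟨x + z, by rw [map_add, map_add, hx, hz]⟩
  | tmul r m =>
    obtain ⟨a, rfl⟩ := AdicCompletion.of_surjective I A r
    refine ⟨a • m, ?_⟩
    rw [AdicCompletion.ofTensorProduct_tmul, map_smul]
    rfl

lemma finite_of_finite_quotient_smul_top {A M : Type*} [CommRing A] (I : Ideal A)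
    [IsPrecomplete I A] [AddCommGroup M] [Module A M] [IsHausdorff I M]
    [Module.Finite A (M ⧸ (I • ⊤ : Submodule A M))] : Module.Finite A M := by
  obtain ⟨n, f, hf⟩ := Module.Finite.exists_fin' A (M ⧸ (I • ⊤ : Submodule A M))
  obtain ⟨g, hg⟩ := Module.projective_lifting_property (I • ⊤ : Submodule A M).mkQ f
    (Submodule.mkQ_surjective _)
  have : IsPrecomplete I (Fin n → A) := isPrecomplete_of_finite I
  exact .of_surjective g (surjective_of_mkQ_comp_surjective (I := I) (hg ▸ hf))

section Integral

variable {A B : Type*} [CommRing A] [IsLocalRing A] [CommRing B] [Algebra A B]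
  [Algebra.IsIntegral A B]

lemma map_maximalIdeal_ne_top [Nontrivial B] : (maximalIdeal A).map (algebraMap A B) ≠ ⊤ := by
  obtain ⟨Q, hQ, hQm⟩ := Ideal.exists_ideal_over_maximal_of_isIntegral (S := B) (maximalIdeal A)
    (le_maximalIdeal (RingHom.ker_ne_top _))
  exact fun h => hQ.ne_top (top_le_iff.mp (h ▸ Ideal.map_le_iff_le_comap.mpr hQm.ge))

variable [IsDomain B]

lemma isNoetherianRing_of_isNoetherian_quotient (h : ∀ a ∈ maximalIdeal A, algebraMap A B a ≠ 0 →
    IsNoetherian A (B ⧸ Ideal.span {algebraMap A B a})) : IsNoetherianRing B := by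
  refine isNoetherianRing_iff_ideal_fg _ |>.mpr fun I => ?_
  rcases eq_or_ne I ⊥ with rfl | hI
  · exact Submodule.fg_bot
  obtain ⟨g, hgI, hg0⟩ := Submodule.exists_mem_ne_zero_of_ne_bot hI
  obtain ⟨a, g', ha0, hga⟩ :=
    exists_mul_eq_algebraMap hg0 (Algebra.IsIntegral.isIntegral (R := A) g)
  have haI : algebraMap A B a ∈ I := hga ▸ I.mul_mem_right _ hgI
  by_cases hu : IsUnit a
  · exact Ideal.eq_top_of_isUnit_mem _ haI (hu.map _) ▸ Module.Finite.fg_top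
  have := h a hu ha0
  have : IsNoetherian B (B ⧸ Ideal.span {algebraMap A B a}) := isNoetherian_of_tower A inferInstance
  refine Submodule.fg_of_fg_map_of_fg_inf_ker (Submodule.mkQ (Ideal.span {algebraMap A B a}))
    (IsNoetherian.noetherian _) ?_
  rw [Submodule.ker_mkQ, inf_eq_right.mpr ((Ideal.span_singleton_le_iff_mem I).mpr haI)]
  exact Submodule.fg_span_singleton _

lemma isHausdorff_maximalIdeal [IsNoetherianRing B] : IsHausdorff (maximalIdeal A) B :=
  IsHausdorff.map_algebraMap_iff.mp (IsHausdorff.of_isDomain _ map_maximalIdeal_ne_top)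

lemma finite_of_isNoetherian_quotient [IsAdicComplete (maximalIdeal A) A]
    (h : ∀ a ∈ maximalIdeal A, algebraMap A B a ≠ 0 →
      IsNoetherian A (B ⧸ Ideal.span {algebraMap A B a}))
    {a : A} (ha : a ∈ maximalIdeal A) (ha0 : algebraMap A B a ≠ 0) : Module.Finite A B := by
  have := isNoetherianRing_of_isNoetherian_quotient h
  have := isHausdorff_maximalIdeal (A := A) (B := B)
  have : Module.Finite A (B ⧸ (Ideal.span {algebraMap A B a}).restrictScalars A) :=
    have := h a ha ha0
    inferInstanceAs (Module.Finite A (B ⧸ Ideal.span {algebraMap A B a}))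
  have hle : (Ideal.span {algebraMap A B a}).restrictScalars A ≤ maximalIdeal A • ⊤ := by
    rw [Ideal.smul_top_eq_map]
    exact (Ideal.span_singleton_le_iff_mem _).mpr (Ideal.mem_map_of_mem _ ha)
  have : Module.Finite A (B ⧸ (maximalIdeal A • ⊤ : Submodule A B)) :=
    .of_surjective (Submodule.factor hle) (Submodule.factor_surjective hle)
  exact finite_of_finite_quotient_smul_top (maximalIdeal A)

end Integral

section Normalization

variable {A K : Type*} [CommRing A] [Field K]

lemma isNoetherian_quotient_span_singleton_of_weaklyAssociatedPrimes {E D : Subring K}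
    [Algebra E D] [IsScalarTower E D K] [IsNoetherianRing E] [IsFractionRing E K]
    [Algebra.IsIntegral E D] [IsIntegrallyClosedIn D K] [Algebra A D] {x : E} (hx : x ≠ 0)
    (h : ∀ P ∈ weaklyAssociatedPrimes (Ideal.span {algebraMap E D x}), IsNoetherian A (D ⧸ P)) :
    IsNoetherian A (D ⧸ Ideal.span {algebraMap E D x}) := by
  have hxD : algebraMap E D x ≠ 0 := fun h0 =>
    hx (Subtype.ext ((coe_algebraMap (D := D) x).symm.trans (congrArg Subtype.val h0)))
  refine isNoetherian_quotient_span_singleton (finite_weaklyAssociatedPrimes_span_singleton hx)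
    (fun P hP => isPrime_of_mem_weaklyAssociatedPrimes hP)
    (fun P hP => have := isPrime_of_mem_weaklyAssociatedPrimes hP
      isDiscreteValuationRing_localization_of_mem_weaklyAssociatedPrimes hx hP)
    hxD (fun b hb => ?_) h
  simp only [← Ideal.mem_span_singleton] at hb ⊢
  exact mem_of_forall_mem_weaklyAssociatedPrimes hb

lemma isNoetherian_quotient_span_singleton_of_genericallyFinite [IsNoetherianRing A]
    {E D : Subring K} [Algebra E D] [IsScalarTower E D K] [IsFractionRing E K]
    [Algebra.IsIntegral E D] [IsIntegrallyClosedIn D K] [Algebra A E] [Module.Finite A E]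
    [Algebra A D] [IsScalarTower A E D] {a : A} (ha : algebraMap A E a ≠ 0)
    (h : ∀ P : Ideal D, P.IsPrime → algebraMap A D a ∈ P → GenericallyFinite A (D ⧸ P) →
      IsNoetherian A (D ⧸ P)) :
    IsNoetherian A (D ⧸ Ideal.span {algebraMap A D a}) := by
  have : IsNoetherianRing E := .of_finite A E
  rw [IsScalarTower.algebraMap_apply A E D] at h ⊢
  refine isNoetherian_quotient_span_singleton_of_weaklyAssociatedPrimes ha fun P hP => ?_
  have hprime := isPrime_of_mem_weaklyAssociatedPrimes hP
  exact h P hprime (le_of_mem_weaklyAssociatedPrimes hP (Ideal.mem_span_singleton_self _))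
    ((genericallyFinite_quotient ha hP).restrictScalars A)

section Subalgebra

variable [Algebra A K]

instance (B : Subalgebra A K) : Algebra A B.toSubring := inferInstanceAs (Algebra A B)

instance (B : Subalgebra A K) : IsScalarTower A B.toSubring K := .of_algebraMap_eq' rfl

instance (B : Subalgebra A K) [Module.Finite A B] : Module.Finite A B.toSubring :=
  ‹Module.Finite A B›

instance (B : Subalgebra A K) [IsFractionRing B K] : IsFractionRing B.toSubring K :=
  ‹IsFractionRing B K›

variable (A K) in
/-- The integral closure of `A` in `K`, as a subring of the field `K`. -/
abbrev integralClosureSubring : Subring K := (integralClosure A K).toSubring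

instance : Algebra.IsIntegral A (integralClosureSubring A K) :=
  inferInstanceAs (Algebra.IsIntegral A (integralClosure A K))

instance : IsIntegrallyClosedIn (integralClosureSubring A K) K :=
  inferInstanceAs (IsIntegrallyClosedIn (integralClosure A K) K)

lemma algebraMap_integralClosureSubring_eq_zero_iff {a : A} :
    algebraMap A (integralClosureSubring A K) a = 0 ↔ algebraMap A K a = 0 := by
  rw [IsScalarTower.algebraMap_apply A (integralClosureSubring A K) K]
  exact (map_eq_zero_iff _ Subtype.val_injective).symm

end Subalgebra

lemma isNoetherian_quotient_integralClosureSubring [IsNoetherianRing A] [Algebra A K]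
    (E : Subalgebra A K) [Module.Finite A E] [IsFractionRing E K] {a : A}
    (ha : algebraMap A K a ≠ 0)
    (h : ∀ P : Ideal (integralClosureSubring A K), P.IsPrime →
      algebraMap A (integralClosureSubring A K) a ∈ P →
      GenericallyFinite A (integralClosureSubring A K ⧸ P) →
      IsNoetherian A (integralClosureSubring A K ⧸ P)) :
    IsNoetherian A (integralClosureSubring A K ⧸
      Ideal.span {algebraMap A (integralClosureSubring A K) a}) := by
  have hle : E ≤ integralClosure A K := fun e he =>
    (Algebra.IsIntegral.isIntegral (R := A) (⟨e, he⟩ : E)).map E.val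
  let : Algebra E.toSubring (integralClosureSubring A K) := (Subring.inclusion hle).toAlgebra
  have : IsScalarTower E.toSubring (integralClosureSubring A K) K := .of_algebraMap_eq' rfl
  have : IsScalarTower A E.toSubring (integralClosureSubring A K) := .of_algebraMap_eq' rfl
  have : Algebra.IsIntegral E.toSubring (integralClosureSubring A K) := .tower_top A
  refine isNoetherian_quotient_span_singleton_of_genericallyFinite (E := E.toSubring)
    (fun h0 => ha ?_) h
  rw [IsScalarTower.algebraMap_apply A E.toSubring K, h0, map_zero]

end Normalization

lemma ker_lt_ker_quotient {A D : Type*} [CommRing A] [CommRing D] [Algebra A D] {P : Ideal D}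
    {a : A} (ha : algebraMap A D a ≠ 0) (haP : algebraMap A D a ∈ P) :
    RingHom.ker (algebraMap A D) < RingHom.ker (algebraMap A (D ⧸ P)) := by
  refine SetLike.lt_iff_le_and_exists.mpr ⟨fun b hb => ?_, a,
    Ideal.Quotient.eq_zero_iff_mem.mpr haP, ha⟩
  rw [RingHom.mem_ker, IsScalarTower.algebraMap_apply A D, RingHom.mem_ker.mp hb, map_zero]

variable {A : Type*} [CommRing A] [IsLocalRing A]

lemma GenericallyFinite.finite_of_ker_eq_maximalIdeal {G : Type*} [CommRing G] [Algebra A G]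
    (h : GenericallyFinite A G) (hker : RingHom.ker (algebraMap A G) = maximalIdeal A) :
    Module.Finite A G := by
  obtain ⟨N, hN, hNG⟩ := h
  suffices N = ⊤ from ⟨this ▸ hN⟩
  refine (Submodule.eq_top_iff' (p := N)).mpr fun g => ?_
  obtain ⟨a, ha, hag⟩ := hNG g
  have hunit : IsUnit a := notMem_maximalIdeal.mp (hker ▸ ha)
  exact (Submodule.smul_mem_iff_of_isUnit N hunit).mp hag

variable [IsNoetherianRing A] [IsAdicComplete (maximalIdeal A) A]

theorem GenericallyFinite.finite {G : Type*} [CommRing G] [IsDomain G] [Algebra A G]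
    [Algebra.IsIntegral A G] (h : GenericallyFinite A G) : Module.Finite A G := by
  induction hp : RingHom.ker (algebraMap A G) using IsNoetherian.induction generalizing G with
  | hgt p ih =>
  subst hp
  have hle : RingHom.ker (algebraMap A G) ≤ maximalIdeal A :=
    le_maximalIdeal (RingHom.ker_ne_top _)
  rcases hle.eq_or_lt with hker | hlt
  · exact h.finite_of_ker_eq_maximalIdeal hker
  obtain ⟨y, hy, hyker⟩ := SetLike.exists_of_lt hlt
  let K := FractionRing G
  let D := integralClosureSubring A K
  let f : G →ₐ[A] K := IsScalarTower.toAlgHom A G K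
  have hf : Function.Injective f := IsFractionRing.injective G K
  have hker : RingHom.ker (algebraMap A D) = RingHom.ker (algebraMap A G) := by
    ext a
    rw [RingHom.mem_ker, algebraMap_integralClosureSubring_eq_zero_iff, ← f.commutes,
      map_eq_zero_iff f hf, RingHom.mem_ker]
  rw [← hker] at hyker ih
  obtain ⟨E, hE, hEK⟩ := h.exists_subalgebra_isFractionRing K
  have hD : Module.Finite A D := by
    refine finite_of_isNoetherian_quotient (fun a _ ha => ?_) hy hyker
    refine isNoetherian_quotient_integralClosureSubring E
      (algebraMap_integralClosureSubring_eq_zero_iff.not.mp ha) fun P hP haP hfin => ?_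
    have : Algebra.IsIntegral A (D ⧸ P) :=
      .of_surjective (Ideal.Quotient.mkₐ A P) Ideal.Quotient.mk_surjective
    have : Module.Finite A (D ⧸ P) := ih _ (ker_lt_ker_quotient ha haP) hfin rfl
    infer_instance
  have : Module.Finite A (integralClosure A K) := hD
  let ι : G →ₐ[A] integralClosure A K :=
    f.codRestrict _ fun g => (Algebra.IsIntegral.isIntegral g).map f
  have hι : Function.Injective ι := (AlgHom.injective_codRestrict f _ _).mpr hf
  exact .of_injective ι.toLinearMap hι

end Finiteness

section AdicComplete

variable {B : Type*} [CommRing B]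

lemma isPrecomplete_of_pow_le_of_le {M : Type*} [AddCommGroup M] [Module B M] {I J : Ideal B}
    {k : ℕ} (hIJ : I ^ k ≤ J) (hJI : J ≤ I) [IsPrecomplete J M] : IsPrecomplete I M := by
  refine ⟨fun f hf => ?_⟩
  have hpow (n : ℕ) : I ^ ((k + 1) * n) ≤ J ^ n := by
    rw [pow_mul]
    exact Ideal.pow_right_mono ((Ideal.pow_le_pow_right k.le_succ).trans hIJ) n
  obtain ⟨L, hL⟩ := IsPrecomplete.prec ‹_› (f := fun n => f ((k + 1) * n)) fun {m n} hmn =>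
    (hf (Nat.mul_le_mul_left _ hmn)).mono (Submodule.smul_mono_left (hpow m))
  exact ⟨L, fun n => (hf (Nat.le_mul_of_pos_left n k.succ_pos)).trans
    ((hL n).mono (Submodule.smul_mono_left (Ideal.pow_right_mono hJI n)))⟩

lemma isUnit_or_isNilpotent_of_isIdempotentElem {R : Type*} [CommRing R] [IsArtinianRing R]
    (hR : ∀ e : R, IsIdempotentElem e → e = 0 ∨ e = 1) (x : R) : IsUnit x ∨ IsNilpotent x := by
  obtain ⟨n, y, hy⟩ := IsArtinian.exists_pow_succ_smul_dvd x (1 : R)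
  have hxy : x ^ n * (x * y) = x ^ n := by
    simpa only [smul_eq_mul, mul_one, pow_succ, mul_assoc] using hy
  have hpow (k : ℕ) : x ^ n * (x * y) ^ k = x ^ n := by
    induction k with
    | zero => rw [pow_zero, mul_one]
    | succ k ih => rw [pow_succ', ← mul_assoc, hxy, ih]
  have he : IsIdempotentElem ((x * y) ^ n) := by
    calc (x * y) ^ n * (x * y) ^ n = x ^ n * (x * y) ^ n * y ^ n := by ring
      _ = (x * y) ^ n := by rw [hpow, mul_pow]
  rcases hR _ he with h0 | h1
  · exact .inr ⟨n, by rw [← hpow n, h0, mul_zero]⟩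
  · have hxn : IsUnit (x ^ n) := .of_mul_eq_one (y ^ n) (by rw [← mul_pow, h1])
    have hdvd : x ∣ x ^ n := ⟨x ^ n * y, by rw [mul_left_comm, hxy]⟩
    exact .inl (isUnit_of_dvd_unit hdvd hxn)

section Henselian

variable {J : Ideal B} [HenselianRing B J]

lemma exists_isIdempotentElem_sub_mem {e : B} (he : IsIdempotentElem (Ideal.Quotient.mk J e)) :
    ∃ e', IsIdempotentElem e' ∧ e' - e ∈ J := by
  obtain ⟨e', hroot, hmem⟩ := HenselianRing.is_henselian (I := J)
    (Polynomial.X ^ 2 - Polynomial.X : Polynomial B) (by monicity!) e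
    (by simpa [sq, ← Ideal.Quotient.eq] using he.eq)
    (.of_mul_eq_one (Ideal.Quotient.mk J (2 * e - 1)) (by
      have hderiv : (Polynomial.X ^ 2 - Polynomial.X : Polynomial B).derivative.eval e =
          2 * e - 1 := by simp [one_add_one_eq_two]
      rw [hderiv]
      simp only [map_sub, map_mul, map_one, map_ofNat]
      linear_combination 4 * he.eq))
  exact ⟨e', by simpa [IsIdempotentElem, sq, sub_eq_zero] using hroot, hmem⟩

lemma eq_zero_or_eq_one_of_isIdempotentElem_quotient [IsDomain B] (e : B ⧸ J)
    (he : IsIdempotentElem e) : e = 0 ∨ e = 1 := by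
  obtain ⟨b, rfl⟩ := Ideal.Quotient.mk_surjective e
  obtain ⟨b', hb', hmem⟩ := exists_isIdempotentElem_sub_mem he
  rw [← Ideal.Quotient.eq.mpr hmem]
  rcases IsIdempotentElem.iff_eq_zero_or_one.mp hb' with rfl | rfl
  · exact .inl (map_zero _)
  · exact .inr (map_one _)

end Henselian

variable [IsDomain B]

lemma isUnit_or_isNilpotent_mk (J : Ideal B) [IsAdicComplete J B] [IsArtinianRing (B ⧸ J)] (x : B) :
    IsUnit x ∨ IsNilpotent (Ideal.Quotient.mk J x) :=
  have := isLocalHom_of_le_jacobson_bot J (IsAdicComplete.le_jacobson_bot J)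
  (isUnit_or_isNilpotent_of_isIdempotentElem
    eq_zero_or_eq_one_of_isIdempotentElem_quotient _).imp_left (isUnit_of_map_unit _ x)

lemma isLocalRing_of_isArtinianRing_quotient (J : Ideal B) [IsAdicComplete J B]
    [IsArtinianRing (B ⧸ J)] : IsLocalRing B :=
  have := isLocalHom_of_le_jacobson_bot J (IsAdicComplete.le_jacobson_bot J)
  .of_isUnit_or_isUnit_one_sub_self fun x => (isUnit_or_isNilpotent_mk J x).imp_right
    fun hx => isUnit_of_map_unit (Ideal.Quotient.mk J) _ (by simpa using hx.isUnit_one_sub)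

lemma isAdicComplete_maximalIdeal_of_isArtinianRing_quotient [IsNoetherianRing B]
    [IsLocalRing B] (J : Ideal B) [IsAdicComplete J B] [IsArtinianRing (B ⧸ J)] :
    IsAdicComplete (maximalIdeal B) B := by
  have hle : J ≤ maximalIdeal B :=
    (IsAdicComplete.le_jacobson_bot J).trans (jacobson_eq_maximalIdeal _ bot_ne_top).le
  have hrad : maximalIdeal B ≤ J.radical := fun x hx => by
    obtain ⟨n, hn⟩ := (isUnit_or_isNilpotent_mk J x).resolve_left hx
    exact ⟨n, Ideal.Quotient.eq_zero_iff_mem.mp (by rwa [map_pow])⟩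
  obtain ⟨k, hk⟩ := Ideal.exists_pow_le_of_le_radical_of_fg hrad (IsNoetherian.noetherian _)
  have : IsHausdorff (maximalIdeal B) B := .of_isDomain _ Ideal.IsPrime.ne_top'
  have : IsPrecomplete (maximalIdeal B) B := isPrecomplete_of_pow_le_of_le hk hle
  exact {}

theorem exists_isLocalRing_isAdicComplete_of_finite (A : Type*) [CommRing A] [IsNoetherianRing A]
    [IsLocalRing A] [IsAdicComplete (maximalIdeal A) A] [Algebra A B] [Module.Finite A B] :
    ∃ h : IsLocalRing B, IsAdicComplete (@maximalIdeal _ _ h) B := by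
  let J := (maximalIdeal A).map (algebraMap A B)
  have : IsNoetherianRing B := .of_finite A B
  have : IsHausdorff J B := .of_isDomain _ map_maximalIdeal_ne_top
  have : IsPrecomplete J B := IsPrecomplete.map_algebraMap_iff.mpr (isPrecomplete_of_finite _)
  have : IsAdicComplete J B := {}
  have hsmul : ∀ a ∈ maximalIdeal A ^ 1, ∀ y : B ⧸ J, a • y = 0 := fun a ha y => by
    rw [Algebra.smul_def, IsScalarTower.algebraMap_apply A B, Ideal.Quotient.algebraMap_eq,
      Ideal.Quotient.eq_zero_iff_mem.mpr (Ideal.mem_map_of_mem _ (pow_one (maximalIdeal A) ▸ ha)),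
      zero_mul]
  have : IsArtinian A (B ⧸ J) := isArtinian_of_pow_smul_eq_zero hsmul
  have : IsArtinianRing (B ⧸ J) := isArtinian_of_tower A this
  have hlocal := isLocalRing_of_isArtinianRing_quotient J
  exact ⟨hlocal, isAdicComplete_maximalIdeal_of_isArtinianRing_quotient J⟩

end AdicComplete

lemma genericallyFinite_integralClosure (A K L : Type*) [CommRing A] [IsDomain A] [Field K]
    [Algebra A K] [IsFractionRing A K] [Field L] [Algebra K L] [Algebra A L] [IsScalarTower A K L]
    [FiniteDimensional K L] : GenericallyFinite A (integralClosure A L) := by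
  obtain ⟨s, v, hv⟩ := FiniteDimensional.exists_is_basis_integral A K L
  let w (i : s) : integralClosure A L := ⟨v i, hv i⟩
  refine ⟨Submodule.span A (Set.range w), Submodule.fg_span (Set.finite_range w), fun g => ?_⟩
  obtain ⟨d, hd⟩ := IsLocalization.exist_integer_multiples_of_finite (nonZeroDivisors A)
    (v.repr (g : L))
  choose a ha using hd
  have hdg : (d : A) • g = ∑ i, a i • w i := by
    apply Subtype.ext
    push_cast
    calc (d : A) • (g : L) = ∑ i, ((d : A) • v.repr (g : L) i) • v i := by
          simp_rw [smul_assoc, ← Finset.smul_sum, v.sum_repr]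
      _ = ∑ i, a i • v i := by simp_rw [← ha, algebraMap_smul]
  refine ⟨d, ?_, hdg ▸ Submodule.sum_smul_mem _ _ fun i _ =>
    Submodule.subset_span (Set.mem_range_self i)⟩
  have := FaithfulSMul.trans A K L
  exact fun h => nonZeroDivisors.coe_ne_zero d <|
    FaithfulSMul.algebraMap_injective A L (by simpa using congrArg Subtype.val h)

end CompleteLocalDomain

theorem integralClosure_of_complete_local_domain_general (A K L : Type*) [CommRing A] [IsDomain A]
    [IsNoetherianRing A] [IsLocalRing A] [IsAdicComplete (IsLocalRing.maximalIdeal A) A] [Field K]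
    [Algebra A K] [IsFractionRing A K] [Field L] [Algebra K L] [Algebra A L] [IsScalarTower A K L]
    [FiniteDimensional K L] :
    Module.Finite A (integralClosure A L) ∧
      IsNoetherianRing (integralClosure A L) ∧
      IsDomain (integralClosure A L) ∧
      ∃ h : IsLocalRing (integralClosure A L),
        IsAdicComplete (@IsLocalRing.maximalIdeal _ _ h) (integralClosure A L) := by
  have hfin : Module.Finite A (integralClosure A L) :=
    (CompleteLocalDomain.genericallyFinite_integralClosure A K L).finite
  exact ⟨hfin, .of_finite A _, inferInstance,
    CompleteLocalDomain.exists_isLocalRing_isAdicComplete_of_finite A⟩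

/-- Let `A` be a Noetherian complete local domain. Then the integral
closure `Ā` of `A` in its field of fractions is a finite `A`-module, and `Ā` is itself
a Noetherian complete local domain (complete with respect to the adic topology of its
maximal ideal). -/
theorem integralClosure_of_complete_local_domain
    (A : Type*) [CommRing A] [IsDomain A] [IsNoetherianRing A] [IsLocalRing A]
    [IsAdicComplete (IsLocalRing.maximalIdeal A) A] :
    Module.Finite A (integralClosure A (FractionRing A)) ∧
      IsNoetherianRing (integralClosure A (FractionRing A)) ∧
      IsDomain (integralClosure A (FractionRing A)) ∧
      ∃ h : IsLocalRing (integralClosure A (FractionRing A)),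
        IsAdicComplete (@IsLocalRing.maximalIdeal _ _ h)
          (integralClosure A (FractionRing A)) := by
  exact integralClosure_of_complete_local_domain_general A (FractionRing A) (FractionRing A)
end
end

section
/- Let K be a field, let R be a finitely generated commutative K-algebra, let I ⊆ R be an ideal, and let R̂ denote the I-adic completion of R. Then for every ideal J ⊆ R, the radical of the extended ideal J·R̂ equals the extension (√J)·R̂ of the radical of J. In particular, if J is a radical ideal of R, then J·R̂ is a radical ideal of R̂. -/
set_option synthInstance.maxHeartbeats 1000000
set_option maxHeartbeats 1000000

noncomputable section

/-!
Radicality survives the `I`-adic limit when it holds uniformly modulo the powers of `I`: for each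
`m` there is `n` such that `a ^ 2 ∈ J + I ^ n` implies `a ∈ J + I ^ m`. Artin–Rees makes this
property stable under finite intersections, so it is enough to treat a prime `J`, that is, the zero
ideal of a domain `A` of finite type over a field. There `a ^ 2 ∈ I ^ (2 * n)` makes `a X ^ n`
integral over the Rees algebra of `I`. The integral closure of the Rees algebra in `A[X]` is a
finite module, and comparing degrees with finitely many generators gives `a ∈ I ^ (n - c)` with `c`
independent of `n`.

The finiteness reduces, by Noether normalization, to a polynomial ring `K[X₁, …, Xₛ]` and a finite
extension `L` of its fraction field. In characteristic exponent `p`, passing to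
`K'[X₁ ^ (1 / q), …, Xₛ ^ (1 / q)]`, where `q` is a power of `p` and `K'` contains the `q`-th roots
of finitely many elements of `K`, makes `L` separable, and over an integrally closed base separable
extensions have finite integral closure by the trace form.
-/

universe u v w x

open Polynomial

section Field

theorem exists_forall_isSeparable_pow (F L : Type*) [Field F] [Field L] [Algebra F L]
    [FiniteDimensional F L] (p : ℕ) [ExpChar F p] :
    ∃ e, ∀ x : L, IsSeparable F (x ^ p ^ e) := by
  have : ExpChar (separableClosure F L) p :=
    expChar_of_injective_algebraMap (algebraMap F (separableClosure F L)).injective p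
  refine ⟨IsPurelyInseparable.exponent (separableClosure F L) L, fun x ↦ ?_⟩
  obtain ⟨y, hy⟩ := IsPurelyInseparable.exponent_def' (separableClosure F L) p x
  rw [← hy]
  exact mem_separableClosure_iff.mp y.2

variable {F L : Type*} [Field F] [Field L] [Algebra F L]

theorem isSeparable_of_separable_map_iterateFrobenius (p e : ℕ) [ExpChar F p] {x : L} {f : F[X]}
    (hsep : (f.map (iterateFrobenius F p e)).Separable)
    (hroot : aeval (x ^ p ^ e) (f.map (iterateFrobenius F p e)) = 0) : IsSeparable F x := by
  have : ExpChar L p := expChar_of_injective_algebraMap (algebraMap F L).injective p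
  have hx : aeval x f = 0 := by
    have hpow : iterateFrobenius L p e (aeval x f) =
        aeval (x ^ p ^ e) (f.map (iterateFrobenius F p e)) := by
      rw [aeval_def, aeval_def, hom_eval₂, eval₂_map, RingHom.iterateFrobenius_comm,
        iterateFrobenius_def]
    exact (map_eq_zero_iff _ (iterateFrobenius L p e).injective).mp (hpow.trans hroot)
  exact ((separable_map _).mp hsep).of_dvd (minpoly.dvd F x hx)

theorem isSeparable_of_coeff_minpoly_pow_mem_range {F' : Type*} [Field F'] [Algebra F F']
    [Algebra F' L] [IsScalarTower F F' L] (p e : ℕ) [ExpChar F p] {x : L}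
    (hsep : IsSeparable F (x ^ p ^ e))
    (hroot : ∀ n, ∃ r : F', r ^ p ^ e = algebraMap F F' ((minpoly F (x ^ p ^ e)).coeff n)) :
    IsSeparable F' x := by
  have : ExpChar F' p := expChar_of_injective_algebraMap (algebraMap F F').injective p
  have hlift : (minpoly F (x ^ p ^ e)).map (algebraMap F F') ∈ lifts (iterateFrobenius F' p e) := by
    rw [lifts_iff_coeff_lifts]
    intro n
    obtain ⟨r, hr⟩ := hroot n
    exact ⟨r, by rw [coeff_map, ← hr, iterateFrobenius_def]⟩
  obtain ⟨f, hf⟩ := (mem_lifts _).mp hlift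
  refine isSeparable_of_separable_map_iterateFrobenius p e (f := f) ?_ ?_
  · exact hf ▸ Polynomial.Separable.map hsep
  · rw [hf, aeval_map_algebraMap, minpoly.aeval]

theorem exists_separable_compositum {F' : Type*} [Field F'] [Algebra F F'] (p e : ℕ) [ExpChar F p]
    {S : Set L} (hS : S.Finite) (hgen : IntermediateField.adjoin F S = ⊤)
    (hsep : ∀ x ∈ S, IsSeparable F (x ^ p ^ e))
    (hroot : ∀ x ∈ S, ∀ n,
      ∃ r : F', r ^ p ^ e = algebraMap F F' ((minpoly F (x ^ p ^ e)).coeff n)) :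
    ∃ E : IntermediateField F' (AlgebraicClosure F'), FiniteDimensional F' E ∧
      Algebra.IsSeparable F' E ∧ Nonempty (L →ₐ[F] E) := by
  have hint : ∀ x ∈ S, IsIntegral F x := fun x hx ↦
    .of_pow (expChar_pow_pos F p e) (hsep x hx).isIntegral
  obtain ⟨φ⟩ : Nonempty (L →ₐ[F] AlgebraicClosure F') :=
    IntermediateField.nonempty_algHom_of_adjoin_splits
      (fun x hx ↦ ⟨hint x hx, IsAlgClosed.splits _⟩) hgen
  let E := IntermediateField.adjoin F' (φ '' S)
  have hsepE : ∀ y ∈ φ '' S, IsSeparable F' y := by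
    rintro _ ⟨x, hx, rfl⟩
    have hmin : minpoly F (φ x ^ p ^ e) = minpoly F (x ^ p ^ e) := by
      rw [← map_pow, minpoly.algHom_eq φ φ.injective]
    refine isSeparable_of_coeff_minpoly_pow_mem_range (F := F) p e ?_ (hmin ▸ hroot x hx)
    rw [IsSeparable, hmin]
    exact hsep x hx
  have hφE : ∀ x, φ x ∈ E.restrictScalars F := by
    have hle : IntermediateField.adjoin F S ≤ (E.restrictScalars F).comap φ :=
      IntermediateField.adjoin_le_iff.mpr fun x hx ↦
        IntermediateField.subset_adjoin F' _ ⟨x, hx, rfl⟩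
    exact fun x ↦ hle (hgen ▸ IntermediateField.mem_top)
  have : Finite (φ '' S) := hS.image φ
  exact ⟨E, IntermediateField.finiteDimensional_adjoin fun y hy ↦ (hsepE y hy).isIntegral,
    (IntermediateField.isSeparable_adjoin_iff_isSeparable F' _).mpr hsepE,
    ⟨φ.codRestrict (E.restrictScalars F).toSubalgebra hφE⟩⟩

theorem exists_forall_separable_compositum (F : Type u) (L : Type v) [Field F] [Field L]
    [Algebra F L] [FiniteDimensional F L] (p : ℕ) [ExpChar F p] :
    ∃ (e : ℕ) (T : Finset F), ∀ (F' : Type w) [Field F'] [Algebra F F'],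
      (∀ c ∈ T, ∃ r : F', r ^ p ^ e = algebraMap F F' c) →
      ∃ E : IntermediateField F' (AlgebraicClosure F'), FiniteDimensional F' E ∧
        Algebra.IsSeparable F' E ∧ Nonempty (L →ₐ[F] E) := by
  classical
  obtain ⟨e, he⟩ := exists_forall_isSeparable_pow F L p
  obtain ⟨S, hS⟩ := (⊤ : IntermediateField F L).fg_of_noetherian
  refine ⟨e, S.biUnion fun x ↦ (minpoly F (x ^ p ^ e)).coeffs, fun F' _ _ hroot ↦ ?_⟩
  refine exists_separable_compositum p e S.finite_toSet hS (fun x _ ↦ he x) fun x hx n ↦ ?_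
  by_cases hn : (minpoly F (x ^ p ^ e)).coeff n = 0
  · exact ⟨0, by rw [hn, map_zero, zero_pow (expChar_pow_pos F p e).ne']⟩
  · exact hroot _ (Finset.mem_biUnion.mpr ⟨x, hx, coeff_mem_coeffs hn⟩)

theorem exists_finiteDimensional_forall_exists_pow_eq {K : Type u} [Field K] (T : Finset K) {n : ℕ}
    (hn : n ≠ 0) : ∃ (K' : Type u) (_ : Field K') (_ : Algebra K K'), FiniteDimensional K K' ∧
      ∀ c ∈ T, ∃ d : K', d ^ n = algebraMap K K' c := by
  let f : K[X] := ∏ c ∈ T, (X ^ n - C c)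
  have hf : f ≠ 0 := Finset.prod_ne_zero_iff.mpr fun c _ ↦ X_pow_sub_C_ne_zero hn.pos c
  refine ⟨f.SplittingField, inferInstance, inferInstance, inferInstance, fun c hc ↦ ?_⟩
  have hsplit : ((X ^ n - C c).map (algebraMap K f.SplittingField)).Splits :=
    (SplittingField.splits f).of_dvd (map_ne_zero hf)
      (Polynomial.map_dvd _ (Finset.dvd_prod_of_mem _ hc))
  obtain ⟨d, hd⟩ := hsplit.exists_eval_eq_zero <| by
    rw [degree_map, degree_X_pow_sub_C hn.pos]
    exact_mod_cast hn
  exact ⟨d, by simpa [sub_eq_zero] using hd⟩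

end Field

section MvPolynomial

theorem finite_expand_comp_map (σ : Type*) {R S : Type*} [Finite σ] [CommRing R] [CommRing S]
    {f : R →+* S} (hf : f.Finite) {n : ℕ} (hn : 0 < n) :
    ((MvPolynomial.expand n).toRingHom.comp (MvPolynomial.map f) :
      MvPolynomial σ R →+* MvPolynomial σ S).Finite := by
  set φ := (MvPolynomial.expand n).toRingHom.comp (MvPolynomial.map (σ := σ) f)
  have hC : φ.comp MvPolynomial.C = MvPolynomial.C.comp f := by ext; simp [φ]
  have hX (i : σ) : MvPolynomial.X i ^ n = φ (MvPolynomial.X i) := by simp [φ]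
  refine RingHom.IsIntegral.to_finite (fun g ↦ ?_) ?_
  · induction g using MvPolynomial.induction_on with
    | C s =>
      obtain ⟨P, hP, hs⟩ := hf.to_isIntegral s
      refine ⟨P.map MvPolynomial.C, hP.map _, ?_⟩
      rw [eval₂_map, hC, ← hom_eval₂, hs, map_zero]
    | add g h hg hh => exact hg.add _ hh
    | mul_X g i hg =>
      exact hg.mul _ ⟨X ^ n - C (MvPolynomial.X i), monic_X_pow_sub_C _ hn.ne', by simp [hX]⟩
  · refine RingHom.FiniteType.of_comp_finiteType (f := MvPolynomial.C) (hC ▸ ?_)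
    exact .comp (RingHom.finiteType_algebraMap.mpr inferInstance) hf.to_finiteType

theorem exists_pow_eq_expand {σ R : Type*} [CommRing R] (p e : ℕ) [ExpChar R p]
    {f : MvPolynomial σ R} (hf : ∀ c ∈ f.coeffs, ∃ d, d ^ p ^ e = c) :
    ∃ g, g ^ p ^ e = MvPolynomial.expand (p ^ e) f := by
  obtain ⟨g, rfl⟩ :=
    (MvPolynomial.mem_range_map_iff_coeffs_subset (f := iterateFrobenius R p e)).mpr hf
  exact ⟨g, by rw [← MvPolynomial.map_expand, MvPolynomial.map_iterateFrobenius_expand]⟩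

theorem exists_finite_integrallyClosed_extension_forall_exists_pow_eq {K : Type u} {σ : Type v}
    [Field K] [Finite σ] (p e : ℕ) [ExpChar K p] (T : Finset (MvPolynomial σ K)) :
    ∃ (B : Type max u v) (_ : CommRing B) (φ : MvPolynomial σ K →+* B),
      IsDomain B ∧ IsIntegrallyClosed B ∧ φ.Finite ∧ Function.Injective φ ∧
        ∀ f ∈ T, ∃ g, g ^ p ^ e = φ f := by
  classical
  have hq := expChar_pow_pos K p e
  obtain ⟨K', _, _, hfin, hroot⟩ :=
    exists_finiteDimensional_forall_exists_pow_eq (T.biUnion MvPolynomial.coeffs) hq.ne'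
  have : ExpChar K' p := expChar_of_injective_algebraMap (algebraMap K K').injective p
  refine ⟨MvPolynomial σ K', inferInstance,
    (MvPolynomial.expand (p ^ e)).toRingHom.comp (MvPolynomial.map (algebraMap K K')),
    inferInstance, inferInstance,
    finite_expand_comp_map σ (RingHom.finite_algebraMap.mpr hfin) hq,
    (MvPolynomial.expand_injective hq).comp
      (MvPolynomial.map_injective _ (algebraMap K K').injective), fun f hf ↦ ?_⟩
  refine exists_pow_eq_expand p e fun c hc ↦ ?_
  obtain ⟨b, hb, rfl⟩ := MvPolynomial.coe_coeffs_map (algebraMap K K') f hc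
  exact hroot b (Finset.mem_biUnion.mpr ⟨f, hf, hb⟩)

end MvPolynomial


section IntegralClosure

theorem finite_integralClosure_of_injective {R A B : Type*} [CommRing R] [IsNoetherianRing R]
    [CommRing A] [Algebra R A] [CommRing B] [Algebra R B] {f : A →ₐ[R] B}
    (hf : Function.Injective f) [Module.Finite R (integralClosure R B)] :
    Module.Finite R (integralClosure R A) :=
  .of_injective f.mapIntegralClosure.toLinearMap fun _ _ h ↦
    Subtype.ext (hf (congrArg Subtype.val h))

theorem finite_integralClosure_iff_of_isIntegral (R S A : Type*) [CommRing R] [CommRing S]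
    [CommRing A] [Algebra R S] [Algebra S A] [Algebra R A] [IsScalarTower R S A]
    [Algebra.IsIntegral R S] :
    Module.Finite R (integralClosure R A) ↔ Module.Finite R (integralClosure S A) := by
  have heq : (integralClosure S A).restrictScalars R = integralClosure R A :=
    Subalgebra.ext fun x ↦ ⟨fun hx ↦ isIntegral_trans (R := R) x hx, IsIntegral.tower_top⟩
  rw [← heq]
  rfl

theorem finite_integralClosure_of_isSeparable (R S F E : Type*) [CommRing R] [IsNoetherianRing R]
    [CommRing S] [IsDomain S] [IsIntegrallyClosed S] [Algebra R S] [Module.Finite R S]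
    [Field F] [Algebra S F] [IsFractionRing S F] [Field E] [Algebra F E] [Algebra S E]
    [IsScalarTower S F E] [FiniteDimensional F E] [Algebra.IsSeparable F E] [Algebra R E]
    [IsScalarTower R S E] :
    Module.Finite R (integralClosure R E) := by
  have : IsNoetherianRing S := .of_finite R S
  have : Module.Finite S (integralClosure S E) := IsIntegralClosure.finite S F E _
  exact (finite_integralClosure_iff_of_isIntegral R S E).mpr (.trans S _)

theorem finite_integralClosure_of_forall_exists_finite_extension_pow_eq {A : Type u} (F : Type v)
    (L : Type w) [CommRing A] [IsNoetherianRing A] (p : ℕ) [ExpChar A p] [Field F]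
    [Algebra A F] [IsFractionRing A F] [Field L] [Algebra F L] [Algebra A L] [IsScalarTower A F L]
    [FiniteDimensional F L]
    (hA : ∀ (e : ℕ) (T : Finset A), ∃ (B : Type x) (_ : CommRing B) (φ : A →+* B),
      IsDomain B ∧ IsIntegrallyClosed B ∧ φ.Finite ∧ Function.Injective φ ∧
        ∀ a ∈ T, ∃ b, b ^ p ^ e = φ a) :
    Module.Finite A (integralClosure A L) := by
  classical
  have : ExpChar F p := expChar_of_injective_algebraMap (IsFractionRing.injective A F) p
  obtain ⟨e, T, hT⟩ := exists_forall_separable_compositum F L p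
  choose num den _ hdiv using IsFractionRing.div_surjective (A := A) (K := F)
  obtain ⟨B, _, φ, _, _, hfin, hinj, hroot⟩ := hA e (T.image num ∪ T.image den)
  let F' := FractionRing B
  algebraize [φ, (algebraMap B F').comp φ]
  have : FaithfulSMul A F' := (faithfulSMul_iff_algebraMap_injective A F').mpr
    ((IsFractionRing.injective B F').comp hinj)
  let _ : Algebra F F' :=
    (IsFractionRing.lift (FaithfulSMul.algebraMap_injective A F')).toAlgebra
  have : IsScalarTower A F F' :=
    .of_algebraMap_eq fun x ↦ (IsFractionRing.lift_algebraMap _ x).symm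
  have hrootA (a : A) (ha : a ∈ T.image num ∪ T.image den) :
      ∃ r : F', r ^ p ^ e = algebraMap F F' (algebraMap A F a) := by
    obtain ⟨b, hb⟩ := hroot a ha
    refine ⟨algebraMap B F' b, ?_⟩
    rw [← map_pow, hb, ← IsScalarTower.algebraMap_apply]
    rfl
  have hrootT (c : F) (hc : c ∈ T) : ∃ r : F', r ^ p ^ e = algebraMap F F' c := by
    obtain ⟨r, hr⟩ := hrootA (num c) (Finset.mem_union_left _ (Finset.mem_image_of_mem _ hc))
    obtain ⟨s, hs⟩ := hrootA (den c) (Finset.mem_union_right _ (Finset.mem_image_of_mem _ hc))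
    exact ⟨r / s, by rw [div_pow, hr, hs, ← map_div₀, hdiv]⟩
  obtain ⟨E, _, _, ⟨ψ⟩⟩ := hT F' hrootT
  have : IsScalarTower A B E := .to₁₂₄ A B F' E
  have : IsScalarTower A F E := .to₁₂₄ A F F' E
  have := finite_integralClosure_of_isSeparable A B F' E
  exact finite_integralClosure_of_injective (f := ψ.restrictScalars A) ψ.injective

theorem finite_integralClosure_mvPolynomial (K σ F L : Type*) [Field K] [Finite σ] [Field F]
    [Algebra (MvPolynomial σ K) F] [IsFractionRing (MvPolynomial σ K) F] [Field L] [Algebra F L]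
    [Algebra (MvPolynomial σ K) L] [IsScalarTower (MvPolynomial σ K) F L] [FiniteDimensional F L] :
    Module.Finite (MvPolynomial σ K) (integralClosure (MvPolynomial σ K) L) := by
  obtain ⟨p, _⟩ := ExpChar.exists K
  have : ExpChar (MvPolynomial σ K) p :=
    expChar_of_injective_algebraMap (FaithfulSMul.algebraMap_injective K _) p
  exact finite_integralClosure_of_forall_exists_finite_extension_pow_eq F L p
    fun e T ↦ exists_finite_integrallyClosed_extension_forall_exists_pow_eq p e T

theorem finite_integralClosure_of_finiteType (K D F L : Type*) [Field K] [CommRing D] [IsDomain D]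
    [Algebra K D] [Algebra.FiniteType K D] [Field F] [Algebra D F] [IsFractionRing D F]
    [Field L] [Algebra D L] [Algebra F L] [IsScalarTower D F L] [FiniteDimensional F L] :
    Module.Finite D (integralClosure D L) := by
  obtain ⟨s, φ, hφ, hfin⟩ := exists_finite_inj_algHom_of_fg K D
  let B := MvPolynomial (Fin s) K
  algebraize [φ.toRingHom, (algebraMap D F).comp φ.toRingHom, (algebraMap D L).comp φ.toRingHom]
  have : Module.Finite B D := hfin
  have : FaithfulSMul B D := (faithfulSMul_iff_algebraMap_injective B D).mpr hφ
  have : FaithfulSMul B F := .trans B D F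
  let _ : Algebra (FractionRing B) F := FractionRing.liftAlgebra B F
  have : IsScalarTower B (FractionRing B) F := FractionRing.isScalarTower_liftAlgebra B F
  have : FiniteDimensional (FractionRing B) F := .of_isLocalization B D (nonZeroDivisors B)
  let _ : Algebra (FractionRing B) L :=
    ((algebraMap F L).comp (algebraMap (FractionRing B) F)).toAlgebra
  have : IsScalarTower (FractionRing B) F L := .of_algebraMap_eq' rfl
  have : IsScalarTower B F L := .to₁₃₄ B D F L
  have : IsScalarTower B (FractionRing B) L := .to₁₂₄ B (FractionRing B) F L
  have : FiniteDimensional (FractionRing B) L := .trans (FractionRing B) F L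
  have : Module.Finite B (integralClosure D L) :=
    (finite_integralClosure_iff_of_isIntegral B D L).mp
      (finite_integralClosure_mvPolynomial K (Fin s) (FractionRing B) L)
  exact .of_restrictScalars_finite B D _

end IntegralClosure

section Rees

variable {A : Type*} [CommRing A]

theorem exists_forall_coeff_mem_pow_sub {I : Ideal A} {N : Submodule (reesAlgebra I) A[X]}
    (hN : N.FG) : ∃ c, ∀ y ∈ N, ∀ i, y.coeff i ∈ I ^ (i - c) := by
  obtain ⟨s, rfl⟩ := hN
  refine ⟨s.sup natDegree, fun y hy ↦ ?_⟩
  induction hy using Submodule.span_induction with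
  | mem y hy =>
    intro i
    obtain hi | hi := le_or_gt i (s.sup natDegree)
    · simp [Nat.sub_eq_zero_of_le hi]
    · rw [coeff_eq_zero_of_natDegree_lt ((Finset.le_sup hy).trans_lt hi)]
      exact zero_mem _
  | zero => simp
  | add y z _ _ hy hz => exact fun i ↦ by simpa only [coeff_add] using add_mem (hy i) (hz i)
  | smul r y _ hy =>
    intro i
    rw [Algebra.smul_def, coeff_mul]
    refine Ideal.sum_mem _ fun ⟨j, k⟩ hjk ↦ ?_
    have hle : i - s.sup natDegree ≤ j + (k - s.sup natDegree) := by
      have := Finset.HasAntidiagonal.mem_antidiagonal.mp hjk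
      lia
    refine Ideal.pow_le_pow_right hle ?_
    rw [pow_add]
    exact Ideal.mul_mem_mul (r.2 j) (hy k)

theorem exists_forall_mem_pow_sub_of_finite_integralClosure {I : Ideal A}
    [Module.Finite (reesAlgebra I) (integralClosure (reesAlgebra I) A[X])] :
    ∃ c, ∀ k ≠ 0, ∀ n a, a ^ k ∈ I ^ (n * k) → a ∈ I ^ (n - c) := by
  obtain ⟨c, hc⟩ := exists_forall_coeff_mem_pow_sub
    (Submodule.fg_top (Subalgebra.toSubmodule (integralClosure (reesAlgebra I) A[X])) |>.mp
      Module.Finite.fg_top)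
  refine ⟨c, fun k hk n a ha ↦ ?_⟩
  have hint : IsIntegral (reesAlgebra I) (monomial n a) := by
    refine .of_pow hk.pos ?_
    rw [monomial_pow]
    exact isIntegral_algebraMap (x := (⟨_, reesAlgebra.monomial_mem.mpr ha⟩ : reesAlgebra I))
  simpa only [coeff_monomial_same] using hc (monomial n a) hint n

theorem C_pow_mul_mem_reesAlgebra {I : Ideal A} {f : A} (hf : f ∈ I) {g : A[X]} {d : ℕ}
    (hg : g.natDegree ≤ d) : C (f ^ d) * g ∈ reesAlgebra I := by
  intro i
  rw [coeff_C_mul]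
  obtain hi | hi := le_or_gt i d
  · exact Ideal.mul_mem_right _ _ (Ideal.pow_le_pow_right hi (Ideal.pow_mem_pow hf d))
  · rw [coeff_eq_zero_of_natDegree_lt (hg.trans_lt hi), mul_zero]
    exact zero_mem _

theorem isFractionRing_reesAlgebra [IsDomain A] {I : Ideal A} (hI : I ≠ ⊥) (L : Type*) [Field L]
    [Algebra A[X] L] [IsFractionRing A[X] L] : IsFractionRing (reesAlgebra I) L := by
  obtain ⟨f, hfI, hf⟩ := Submodule.exists_mem_ne_zero_of_ne_bot hI
  refine IsFractionRing.of_field _ _ fun z ↦ ?_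
  obtain ⟨x, y, -, rfl⟩ := IsFractionRing.div_surjective (A := A[X]) z
  refine ⟨⟨_, C_pow_mul_mem_reesAlgebra hfI (le_max_left x.natDegree y.natDegree)⟩,
    ⟨_, C_pow_mul_mem_reesAlgebra hfI (le_max_right x.natDegree y.natDegree)⟩, ?_⟩
  have hC : algebraMap A[X] L (C (f ^ max x.natDegree y.natDegree)) ≠ 0 := by
    rw [Ne, FaithfulSMul.algebraMap_eq_zero_iff, C_eq_zero]
    exact pow_ne_zero _ hf
  simp only [IsScalarTower.algebraMap_apply (reesAlgebra I) A[X] L, Subalgebra.algebraMap_def,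
    Algebra.algebraMap_self_apply, map_mul, mul_div_mul_left _ _ hC]

theorem finite_integralClosure_reesAlgebra (K : Type*) [Field K] [IsDomain A] [Algebra K A]
    [Algebra.FiniteType K A] {I : Ideal A} (hI : I ≠ ⊥) :
    Module.Finite (reesAlgebra I) (integralClosure (reesAlgebra I) A[X]) := by
  have : IsNoetherianRing A := Algebra.FiniteType.isNoetherianRing K A
  have : Algebra.FiniteType K (reesAlgebra I) := .trans (S := A) inferInstance inferInstance
  have := isFractionRing_reesAlgebra hI (FractionRing A[X])
  have := finite_integralClosure_of_finiteType K (reesAlgebra I) (FractionRing A[X])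
    (FractionRing A[X])
  exact finite_integralClosure_of_injective
    (f := IsScalarTower.toAlgHom (reesAlgebra I) A[X] (FractionRing A[X]))
    (IsFractionRing.injective A[X] (FractionRing A[X]))

theorem exists_forall_mem_pow_sub_of_pow_mem_pow (K : Type*) [Field K] [IsDomain A] [Algebra K A]
    [Algebra.FiniteType K A] (I : Ideal A) :
    ∃ c, ∀ k ≠ 0, ∀ n a, a ^ k ∈ I ^ (n * k) → a ∈ I ^ (n - c) := by
  obtain rfl | hI := eq_or_ne I ⊥
  · refine ⟨0, fun k hk n a ha ↦ ?_⟩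
    obtain rfl | hn := eq_or_ne n 0
    · simp
    · rw [Ideal.bot_pow (mul_ne_zero hn hk), Ideal.mem_bot, pow_eq_zero_iff hk] at ha
      simp [ha]
  · have := finite_integralClosure_reesAlgebra K hI
    exact exists_forall_mem_pow_sub_of_finite_integralClosure

end Rees

/-- `J` is radical uniformly along the powers of `I`: an element whose square lies in `J` modulo
a high power of `I` lies itself in `J` modulo a prescribed power of `I`. This is the form of
radicality that passes to the `I`-adic limit; testing squares suffices, as for radical ideals. -/
def IsUniformlyRadical {R : Type*} [CommRing R] (I J : Ideal R) : Prop :=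
  ∀ m, ∃ n, ∀ a, a ^ 2 ∈ J ⊔ I ^ n → a ∈ J ⊔ I ^ m

namespace IsUniformlyRadical

variable {R : Type*} [CommRing R]

theorem top (I : Ideal R) : IsUniformlyRadical I ⊤ :=
  fun _ ↦ ⟨0, fun _ _ ↦ by simp only [top_sup_eq, Submodule.mem_top]⟩

theorem of_isPrime (K : Type*) [Field K] [Algebra K R] [Algebra.FiniteType K R] (I P : Ideal R)
    [P.IsPrime] : IsUniformlyRadical I P := by
  have : Algebra.FiniteType K (R ⧸ P) :=
    .of_surjective (Ideal.Quotient.mkₐ K P) (Ideal.Quotient.mkₐ_surjective K P)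
  have hmem (n : ℕ) (a : R) : a ∈ P ⊔ I ^ n ↔
      Ideal.Quotient.mk P a ∈ I.map (Ideal.Quotient.mk P) ^ n := by
    rw [← Ideal.map_pow, Ideal.mem_quotient_iff_mem_sup, sup_comm]
  obtain ⟨c, hc⟩ := exists_forall_mem_pow_sub_of_pow_mem_pow K (I.map (Ideal.Quotient.mk P))
  refine fun m ↦ ⟨(m + c) * 2, fun a ha ↦ ?_⟩
  rw [hmem, map_pow] at ha
  rw [hmem]
  simpa only [Nat.add_sub_cancel] using hc 2 two_ne_zero (m + c) _ ha

end IsUniformlyRadical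

section ArtinRees

variable {R : Type*} [CommRing R] [IsNoetherianRing R]

theorem exists_forall_pow_add_inf_le_pow_mul (I J : Ideal R) :
    ∃ k, ∀ m, I ^ (m + k) ⊓ J ≤ I ^ m * J := by
  obtain ⟨k, hk⟩ := Ideal.exists_pow_inf_eq_pow_smul I (M := R) J
  refine ⟨k, fun m ↦ ?_⟩
  have hm := hk (m + k) (Nat.le_add_left k m)
  simp only [smul_eq_mul, Ideal.mul_top, Nat.add_sub_cancel] at hm
  exact hm.trans_le (Ideal.mul_mono_right inf_le_right)

theorem exists_forall_sup_pow_inf_sup_pow_le (I J₁ J₂ : Ideal R) :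
    ∃ k, ∀ m, (J₁ ⊔ I ^ (m + k)) ⊓ (J₂ ⊔ I ^ (m + k)) ≤ J₁ ⊓ J₂ ⊔ I ^ m := by
  obtain ⟨k, hk⟩ := exists_forall_pow_add_inf_le_pow_mul I (J₁ ⊔ J₂)
  refine ⟨k, fun m a ⟨ha₁, ha₂⟩ ↦ ?_⟩
  obtain ⟨j₁, hj₁, e₁, he₁, rfl⟩ := Submodule.mem_sup.mp ha₁
  obtain ⟨j₂, hj₂, e₂, he₂, heq⟩ := Submodule.mem_sup.mp ha₂
  have hdiff : j₁ - j₂ ∈ I ^ m * J₁ ⊔ I ^ m * J₂ := by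
    rw [← Ideal.mul_sup]
    refine hk m ⟨?_, sub_mem (Ideal.mem_sup_left hj₁) (Ideal.mem_sup_right hj₂)⟩
    rw [show j₁ - j₂ = e₂ - e₁ by linear_combination -heq]
    exact sub_mem he₂ he₁
  obtain ⟨i₁, hi₁, i₂, hi₂, hi⟩ := Submodule.mem_sup.mp hdiff
  have hinf : j₁ - i₁ ∈ J₁ ⊓ J₂ := by
    refine ⟨sub_mem hj₁ (Ideal.mul_le_right hi₁), ?_⟩
    rw [show j₁ - i₁ = j₂ + i₂ by linear_combination -hi]
    exact add_mem hj₂ (Ideal.mul_le_right hi₂)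
  have hpow : i₁ + e₁ ∈ I ^ m :=
    add_mem (Ideal.mul_le_left hi₁) (Ideal.pow_le_pow_right (Nat.le_add_right m k) he₁)
  rw [show j₁ + e₁ = (j₁ - i₁) + (i₁ + e₁) by ring]
  exact Submodule.add_mem_sup hinf hpow

end ArtinRees

namespace IsUniformlyRadical

variable {R : Type*} [CommRing R]

theorem inf [IsNoetherianRing R] {I J₁ J₂ : Ideal R} (h₁ : IsUniformlyRadical I J₁)
    (h₂ : IsUniformlyRadical I J₂) : IsUniformlyRadical I (J₁ ⊓ J₂) := by
  intro m
  obtain ⟨k, hk⟩ := exists_forall_sup_pow_inf_sup_pow_le I J₁ J₂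
  obtain ⟨n₁, hn₁⟩ := h₁ (m + k)
  obtain ⟨n₂, hn₂⟩ := h₂ (m + k)
  have hle₁ : J₁ ⊓ J₂ ⊔ I ^ max n₁ n₂ ≤ J₁ ⊔ I ^ n₁ :=
    sup_le_sup inf_le_left (Ideal.pow_le_pow_right (le_max_left n₁ n₂))
  have hle₂ : J₁ ⊓ J₂ ⊔ I ^ max n₁ n₂ ≤ J₂ ⊔ I ^ n₂ :=
    sup_le_sup inf_le_right (Ideal.pow_le_pow_right (le_max_right n₁ n₂))
  exact ⟨max n₁ n₂, fun a ha ↦ hk m ⟨hn₁ a (hle₁ ha), hn₂ a (hle₂ ha)⟩⟩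

theorem of_isRadical (K : Type*) [Field K] [Algebra K R] [Algebra.FiniteType K R] (I : Ideal R)
    {J : Ideal R} (hJ : J.IsRadical) : IsUniformlyRadical I J := by
  have : IsNoetherianRing R := Algebra.FiniteType.isNoetherianRing K R
  have hfin := J.finite_minimalPrimes_of_isNoetherianRing
  have hinf : hfin.toFinset.inf id = J := by
    rw [Finset.inf_id_eq_sInf, Set.Finite.coe_toFinset, Ideal.sInf_minimalPrimes, hJ.radical]
  rw [← hinf]
  refine Finset.inf_induction (top I) (fun _ h₁ _ h₂ ↦ h₁.inf h₂) fun P hP ↦ ?_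
  have : P.IsPrime := (hfin.mem_toFinset.mp hP).1.1
  exact of_isPrime K I P

end IsUniformlyRadical

section AdicCompletion

variable {R : Type*} [CommRing R] {I J : Ideal R}

theorem evalₐ_mem_map_of_mem_map {x : AdicCompletion I R}
    (hx : x ∈ J.map (algebraMap R (AdicCompletion I R))) (m : ℕ) :
    AdicCompletion.evalₐ I m x ∈ J.map (Ideal.Quotient.mk (I ^ m)) := by
  have hcomp : (AdicCompletion.evalₐ I m).toRingHom.comp (algebraMap R (AdicCompletion I R)) =
      Ideal.Quotient.mk (I ^ m) :=
    RingHom.ext (AdicCompletion.evalₐ I m).commutes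
  have := Ideal.mem_map_of_mem (AdicCompletion.evalₐ I m).toRingHom hx
  rwa [Ideal.map_map, hcomp] at this

theorem adicCompletion_map_subtype_mem_map [IsNoetherianRing R] (y : AdicCompletion I J) :
    AdicCompletion.map I J.subtype y ∈ J.map (algebraMap R (AdicCompletion I R)) := by
  obtain ⟨t, rfl⟩ := AdicCompletion.ofTensorProduct_surjective_of_finite I J y
  induction t with
  | zero => simp
  | add s t hs ht => simpa only [map_add] using add_mem hs ht
  | tmul r j =>
    rw [AdicCompletion.ofTensorProduct_tmul, map_smul, AdicCompletion.map_of]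
    exact Ideal.mul_mem_left _ _ (Ideal.mem_map_of_mem (algebraMap R (AdicCompletion I R)) j.2)

theorem adicCompletion_map_mkQ_eq_zero {x : AdicCompletion I R}
    (hx : ∀ m, AdicCompletion.evalₐ I m x ∈ J.map (Ideal.Quotient.mk (I ^ m))) :
    AdicCompletion.map I J.mkQ x = 0 := by
  induction x using AdicCompletion.induction_on with
  | _ f =>
    ext m
    obtain ⟨j, hj, e, he, hf⟩ : ∃ j ∈ J, ∃ e ∈ I ^ m, j + e = f m := by
      rw [← Submodule.mem_sup, ← Ideal.mem_quotient_iff_mem_sup, ← AdicCompletion.evalₐ_mk]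
      exact hx m
    have hmk : AdicCompletion.AdicCauchySequence.map I J.mkQ f m = e • J.mkQ 1 := by
      rw [← map_smul, smul_eq_mul, mul_one]
      change J.mkQ (f m) = J.mkQ e
      rw [← hf, map_add, J.mkQ_apply j, (Submodule.Quotient.mk_eq_zero J).mpr hj, zero_add]
    rw [AdicCompletion.map_mk, AdicCompletion.mk_apply_coe, hmk, Submodule.mkQ_apply,
      AdicCompletion.val_zero_apply, Submodule.Quotient.mk_eq_zero]
    exact Submodule.smul_mem_smul he Submodule.mem_top

theorem mem_map_algebraMap_adicCompletion_iff [IsNoetherianRing R] {x : AdicCompletion I R} :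
    x ∈ J.map (algebraMap R (AdicCompletion I R)) ↔
      ∀ m, AdicCompletion.evalₐ I m x ∈ J.map (Ideal.Quotient.mk (I ^ m)) := by
  refine ⟨evalₐ_mem_map_of_mem_map, fun hx ↦ ?_⟩
  have hexact := AdicCompletion.map_exact (I := I) J.subtype_injective
    (LinearMap.exact_subtype_mkQ J) J.mkQ_surjective
  obtain ⟨y, rfl⟩ := (hexact x).mp (adicCompletion_map_mkQ_eq_zero hx)
  exact adicCompletion_map_subtype_mem_map y

theorem IsUniformlyRadical.isRadical_map [IsNoetherianRing R] (h : IsUniformlyRadical I J) :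
    (J.map (algebraMap R (AdicCompletion I R))).IsRadical := by
  refine (Ideal.isRadical_iff_pow_one_lt 2 one_lt_two).mpr fun x hx ↦ ?_
  rw [mem_map_algebraMap_adicCompletion_iff] at hx ⊢
  intro m
  obtain ⟨n, hn⟩ := h m
  induction x using AdicCompletion.induction_on with
  | _ f =>
    have hsq : f (max n m) ^ 2 ∈ J ⊔ I ^ max n m := by
      rw [← Ideal.mem_quotient_iff_mem_sup, map_pow, ← AdicCompletion.evalₐ_mk, ← map_pow]
      exact hx _
    have hmem : f (max n m) ∈ J ⊔ I ^ m :=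
      hn _ (sup_le_sup_left (Ideal.pow_le_pow_right (le_max_left n m)) J hsq)
    rw [AdicCompletion.evalₐ_mk, ← AdicCompletion.Ideal.mk_eq_mk I (le_max_right n m) f]
    exact Ideal.mem_quotient_iff_mem_sup.mpr hmem

end AdicCompletion

theorem isRadical_map_adicCompletion (K : Type*) [Field K] {R : Type*} [CommRing R] [Algebra K R]
    [Algebra.FiniteType K R] (I : Ideal R) {J : Ideal R} (hJ : J.IsRadical) :
    (J.map (algebraMap R (AdicCompletion I R))).IsRadical :=
  have : IsNoetherianRing R := Algebra.FiniteType.isNoetherianRing K R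
  (IsUniformlyRadical.of_isRadical K I hJ).isRadical_map

/-- Let `K` be a field, `R` a finitely generated commutative
`K`-algebra, `I ⊆ R` an ideal and `R̂` the `I`-adic completion of `R`. Then for every
ideal `J ⊆ R` one has `√(J·R̂) = (√J)·R̂`; in particular, if `J` is a radical ideal,
then so is `J·R̂`. -/
theorem radical_map_adicCompletion
    (K : Type*) [Field K] (R : Type*) [CommRing R] [Algebra K R]
    [Algebra.FiniteType K R] (I : Ideal R) (J : Ideal R) :
    (J.map (algebraMap R (AdicCompletion I R))).radical
        = (J.radical).map (algebraMap R (AdicCompletion I R)) ∧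
      (J.IsRadical → (J.map (algebraMap R (AdicCompletion I R))).IsRadical) := by
  refine ⟨le_antisymm ?_ (Ideal.map_radical_le _), isRadical_map_adicCompletion K I⟩
  rw [← (isRadical_map_adicCompletion K I J.radical_isRadical).radical]
  exact Ideal.radical_mono (Ideal.map_mono Ideal.le_radical)
end
end
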